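/- arXiv:1707.02384 — 9 statements merged into one kernel-verified Lean document; each statement's English description precedes it below -/
import Mathlib

section
/- Let k and q be integers with q ≥ 10 and k ≥ 3.3·√q, and let T be a tournament with minimum out-degree at least (q − 1)k − 1. Then for every collection 𝓕 = {C₁, …, C_{k−1}} of k − 1 pairwise vertex-disjoint q-cycles of T, there exists a collection of k pairwise vertex-disjoint q-cycles of T whose union of vertex sets meets V(T) ∖ (V(C₁) ∪ ⋯ ∪ V(C_{k−1})) in at most 3q vertices. -/
open Set

/-- `T` is a tournament: irreflexive, and for distinct vertices exactly one
of the two possible arcs is present. -/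
def IsTournament {V : Type*} (T : V → V → Prop) : Prop :=
  (∀ x, ¬ T x x) ∧ ∀ x y, x ≠ y → (T x y ↔ ¬ T y x)

/-- `c` is a directed cycle of length `q` in the digraph `T`. -/
def IsCycle {V : Type*} (T : V → V → Prop) (q : ℕ) (c : ZMod q → V) : Prop :=
  Function.Injective c ∧ ∀ i, T (c i) (c (i + 1))

/-- The cycles in the family `C` are pairwise vertex-disjoint. -/
def DisjointCycles {V : Type*} {k q : ℕ} (C : Fin k → ZMod q → V) : Prop :=
  ∀ j j' : Fin k, j ≠ j' → Disjoint (Set.range (C j)) (Set.range (C j'))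

/-- `T` contains `k` pairwise vertex-disjoint directed cycles of length `q`. -/
def HasDisjointCycles {V : Type*} (T : V → V → Prop) (k q : ℕ) : Prop :=
  ∃ C : Fin k → ZMod q → V, (∀ j, IsCycle T q (C j)) ∧ DisjointCycles C

/-- The out-degree of a vertex `v`. -/
noncomputable def outDeg {V : Type*} (T : V → V → Prop) (v : V) : ℕ :=
  {w | T v w}.ncard

/-- `d⁺(v, Y)`: the number of out-neighbours of `v` inside the set `Y`. -/
noncomputable def outDegTo {V : Type*} (T : V → V → Prop) (v : V) (Y : Set V) : ℕ :=
  {w ∈ Y | T v w}.ncard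

/-- `d⁺(X, v)`: the number of in-neighbours of `v` inside the set `X`. -/
noncomputable def inDegFrom {V : Type*} (T : V → V → Prop) (X : Set V) (v : V) : ℕ :=
  {x ∈ X | T x v}.ncard

/-- `d⁺(X, Y)`: the number of arcs from `X` to `Y`. -/
noncomputable def arcs {V : Type*} (T : V → V → Prop) (X Y : Set V) : ℕ :=
  {p : V × V | p.1 ∈ X ∧ p.2 ∈ Y ∧ T p.1 p.2}.ncard

/-- There is an `r`-matching from `X` to `Y`: `r` arcs from `X` to `Y` that
pairwise share no endpoints. -/
def HasMatching {V : Type*} (T : V → V → Prop) (X Y : Set V) (r : ℕ) : Prop :=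
  ∃ e : Fin r → V × V,
    (∀ i, (e i).1 ∈ X ∧ (e i).2 ∈ Y ∧ T (e i).1 (e i).2) ∧
    ∀ i j, i ≠ j → (e i).1 ≠ (e j).1 ∧ (e i).2 ≠ (e j).2

/-- `u` is a Hamiltonian path of the subtournament induced on `S`, written as
`P = (u_{l} … u₂ u₁)`: the vertex `u ⟨0,_⟩` is `u₁`, and each arc goes from the
higher-indexed vertex to the next lower-indexed one. -/
def IsHamPathOn {V : Type*} (T : V → V → Prop) (S : Set V) {l : ℕ}
    (u : Fin l → V) : Prop :=
  Function.Injective u ∧ Set.range u = S ∧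
    ∀ (i : ℕ) (h : i + 1 < l), T (u ⟨i + 1, h⟩) (u ⟨i, Nat.lt_of_succ_lt h⟩)


/-- list form of a directed cycle -/
def ListCyc {V : Type*} (T : V → V → Prop) (l : List V) : Prop :=
  l.Nodup ∧ ∃ a t, l = a :: t ∧ List.IsChain T (a :: t ++ [a])

theorem listCyc_toFun {V : Type*} {T : V → V → Prop} {l : List V} (h : ListCyc T l)
    {q : ℕ} (hl : l.length = q) :
    ∃ c : ZMod q → V, IsCycle T q c ∧ ∀ x, x ∈ Set.range c ↔ x ∈ l := by
  obtain ⟨hn, a, t, rfl, hch⟩ := h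
  have hq : q = t.length + 1 := by rw [← hl]; simp
  subst hq
  refine ⟨fun i => (a :: t).get ⟨i.val, by simpa using ZMod.val_lt i⟩, ⟨?_, ?_⟩, ?_⟩
  · intro i j hij
    have := (List.nodup_iff_injective_get.1 hn) hij
    simp only [Fin.mk.injEq] at this
    exact ZMod.val_injective _ this
  · intro i
    have hi := ZMod.val_lt i
    rw [List.isChain_iff_getElem] at hch
    have h1 := hch i.val (by simp; omega)
    by_cases hc : i.val = t.length
    · have h2 : (i + 1).val = 0 := by
        rw [ZMod.val_add, ZMod.val_one_eq_one_mod]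
        simp [hc]
      simp only [h2, List.get_eq_getElem]
      rw [List.getElem_append_left (by simp; omega), List.getElem_append_right (by simp; omega)] at h1
      simpa using h1
    · have h2 : (i + 1).val = i.val + 1 := by
        rw [ZMod.val_add, ZMod.val_one_eq_one_mod]
        rw [Nat.add_mod_mod]
        exact Nat.mod_eq_of_lt (by omega)
      simp only [h2, List.get_eq_getElem]
      rw [List.getElem_append_left (by simp; omega), List.getElem_append_left (by simp; omega)] at h1
      exact h1
  · intro x
    constructor
    · rintro ⟨i, rfl⟩
      exact List.get_mem _ _
    · intro hx
      obtain ⟨i, hi⟩ := List.get_of_mem hx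
      have hlt : i.val < t.length + 1 := by simpa using i.2
      refine ⟨((i.val : ℕ) : ZMod (t.length + 1)), ?_⟩
      simp only [ZMod.val_natCast, Nat.mod_eq_of_lt hlt]
      exact hi

/-- the arc list of a cycle -/
def arcList {V : Type*} {m : ℕ} (f : ZMod m → V) (a : ZMod m) (t : ℕ) : List V :=
  (List.range t).map (fun n => f (a + (n : ℕ)))

theorem arcList_mem {V : Type*} {m : ℕ} (f : ZMod m → V) (a : ZMod m) (t : ℕ) {x : V}
    (h : x ∈ arcList f a t) : x ∈ Set.range f := by
  simp only [arcList, List.mem_map] at h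
  obtain ⟨n, _, rfl⟩ := h
  exact ⟨_, rfl⟩

theorem arcList_nodup {V : Type*} {T : V → V → Prop} {m : ℕ} {f : ZMod m → V}
    (hf : IsCycle T m f) (a : ZMod m) {t : ℕ} (ht : t ≤ m) : (arcList f a t).Nodup := by
  refine List.Nodup.map_on ?_ List.nodup_range
  intro x hx y hy hxy
  have := add_left_cancel (hf.1 hxy)
  simp only [List.mem_range] at hx hy
  rw [ZMod.natCast_eq_natCast_iff'] at this
  rwa [Nat.mod_eq_of_lt (by omega), Nat.mod_eq_of_lt (by omega)] at this

theorem arcList_chain {V : Type*} {T : V → V → Prop} {m : ℕ} {f : ZMod m → V}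
    (hf : IsCycle T m f) (a : ZMod m) (t : ℕ) : (arcList f a t).IsChain T := by
  rw [List.isChain_iff_getElem]
  intro i hi
  simp only [arcList, List.getElem_map, List.getElem_range]
  have := hf.2 (a + i)
  push_cast
  rwa [add_assoc] at this

/-- extend an arc of a cycle by a nonempty outside path -/
theorem arc_extend {V : Type*} {T : V → V → Prop} {m : ℕ} {f : ZMod m → V}
    (hf : IsCycle T m f) (a : ZMod m) {t : ℕ} (ht : t + 1 ≤ m) (x : V) (p : List V)
    (hp : (x :: p).Nodup) (hout : ∀ y ∈ x :: p, y ∉ Set.range f) (hch : (x :: p).IsChain T)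
    (hlast : T ((x :: p).getLast (by simp)) (f a)) (hfirst : T (f (a + (t : ℕ))) x) :
    ListCyc T ((x :: p) ++ arcList f a (t + 1)) := by
  refine ⟨?_, x, p ++ arcList f a (t + 1), by simp, ?_⟩
  · refine List.Nodup.append hp (arcList_nodup hf a ht) ?_
    intro y hy hy'
    exact hout y hy (arcList_mem _ _ _ hy')
  · have e : x :: (p ++ arcList f a (t + 1)) ++ [x] = (x :: p) ++ (arcList f a (t + 1) ++ [x]) := by simp
    rw [e, List.isChain_append, List.isChain_append]
    refine ⟨hch, ⟨arcList_chain hf a _, by simp, ?_⟩, ?_⟩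
    · intro y hy z hz
      simp [arcList, List.range_succ] at hy hz
      subst hy; subst hz; exact hfirst
    · intro y hy z hz
      rw [List.getLast?_eq_getLast_of_ne_nil (by simp)] at hy
      simp [arcList, List.range_succ_eq_map] at hz
      simp only [Option.mem_def, Option.some.injEq] at hy
      subst hy; subst hz; exact hlast

/-- strongness of the subtournament on a finset -/
def Strong {V : Type*} [DecidableEq V] (T : V → V → Prop) (S : Finset V) : Prop :=
  ∀ X ⊆ S, X.Nonempty → X ≠ S → ∃ x ∈ X, ∃ y ∈ S \ X, T x y

theorem tour_or {V : Type*} {T : V → V → Prop} (hT : IsTournament T) {x y : V} (h : x ≠ y)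
    (h' : ¬ T x y) : T y x := by
  have := hT.2 x y h
  tauto

theorem tour_asymm {V : Type*} {T : V → V → Prop} (hT : IsTournament T) {x y : V} (h : T x y) :
    ¬ T y x := by
  by_cases e : x = y
  · subst e; exact hT.1 x
  · exact (hT.2 x y e).1 h

theorem moon {V : Type*} [DecidableEq V] {T : V → V → Prop} (hT : IsTournament T)
    {S : Finset V} (hS : Strong T S) (m : ℕ) (hm : 3 ≤ m) (hmS : m ≤ S.card) :
    ∃ f : ZMod m → V, IsCycle T m f ∧ Set.range f ⊆ S := by
  classical
  induction m, hm using Nat.le_induction with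
  | base =>
    obtain ⟨v, hv⟩ : S.Nonempty := Finset.card_pos.1 (by omega)
    have h1 : S ≠ {v} := by rintro rfl; simp at hmS
    set O := S.filter (fun y => T v y) with hO
    obtain ⟨x, hx, o, ho, hxo⟩ := hS {v} (by simpa using hv) (by simp) h1.symm
    simp only [Finset.mem_singleton] at hx; subst hx
    simp only [Finset.mem_sdiff, Finset.mem_singleton] at ho
    obtain ⟨w, hw, y, hy, hwy⟩ := hS (S \ {x}) Finset.sdiff_subset ⟨o, by simp [ho]⟩
      (by intro h; rw [← h] at hv; simp at hv)
    have hyx : y = x := by simp at hy hw; tauto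
    subst hyx
    simp only [Finset.mem_sdiff, Finset.mem_singleton] at hw
    obtain ⟨a, ha, b, hb, hab⟩ := hS (insert y O)
      (by intro z; simp only [hO, Finset.mem_insert, Finset.mem_filter]; rintro (rfl | h); exacts [hv, h.1])
      (by simp) (by
        intro h
        have := hw.1
        rw [← h] at this
        simp only [hO, Finset.mem_insert, Finset.mem_filter] at this
        exact this.elim hw.2 (fun h => tour_asymm hT h.2 hwy))
    simp only [hO, Finset.mem_sdiff, Finset.mem_insert, Finset.mem_filter, not_or, not_and] at ha hb
    obtain ⟨hb1, hb2, hb3⟩ := hb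
    have hby : T b y := tour_or hT (Ne.symm hb2) (hb3 hb1)
    have hya : T y a := by
      rcases ha with rfl | ha
      · exact absurd hab (hb3 hb1)
      · exact ha.2
    have haS : a ∈ S := by rcases ha with rfl | ha; exacts [hv, ha.1]
    have n1 : y ≠ a := by rintro rfl; exact hT.1 _ hya
    have n2 : a ≠ b := by rintro rfl; exact hT.1 _ hab
    obtain ⟨c, hc, hr⟩ := listCyc_toFun (T := T) (l := [y, a, b])
      ⟨by simp [n1, n2, Ne.symm hb2], y, [a, b], rfl, by simp [hya, hab, hby]⟩ (q := 3) rfl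
    refine ⟨c, hc, ?_⟩
    intro z hz
    rw [hr] at hz
    simp at hz
    rcases hz with rfl | rfl | rfl <;> assumption
  | succ m hm ih =>
    obtain ⟨f, hf, hfS⟩ := ih (by omega)
    haveI : NeZero m := ⟨by omega⟩
    set F : Finset V := Finset.univ.image f with hF
    have hFr : ∀ x, x ∈ F ↔ x ∈ Set.range f := by intro x; simp [hF]
    have hFc : F.card = m := by
      rw [hF, Finset.card_image_of_injective _ hf.1]; simp
    have hFS : F ⊆ S := fun x hx => by simpa using hfS ((hFr x).1 hx)
    have hFne : F.Nonempty := Finset.card_pos.1 (by omega)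
    have hFneS : F ≠ S := by rintro h; rw [h] at hFc; omega
    -- Build from a list
    by_cases hA : ∃ v ∈ S \ F, ∃ i, T (f i) v ∧ T v (f (i + 1))
    · obtain ⟨v, hv, i, h1, h2⟩ := hA
      simp only [Finset.mem_sdiff, hFr] at hv
      have hcyc := arc_extend hf (i + 1) (t := m - 1) (by omega) v [] (by simp)
        (by simpa using hv.2) (by simp) (by simpa using h2) (by
          have : (i + 1 + ((m - 1 : ℕ) : ZMod m)) = i := by
            rw [Nat.cast_sub (by omega)]; simp
          rw [this]; exact h1)
      obtain ⟨c, hc, hr⟩ := listCyc_toFun hcyc (q := m + 1) (by simp [arcList]; omega)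
      refine ⟨c, hc, ?_⟩
      intro z hz
      rw [hr] at hz
      simp only [List.mem_append, List.mem_singleton] at hz
      rcases hz with rfl | hz
      · exact hv.1
      · exact hfS (arcList_mem _ _ _ hz)
    · push Not at hA
      have key : ∀ v ∈ S \ F, ∀ i, T (f i) v → ∀ j, T (f j) v := by
        intro v hv i hi
        have : ∀ n : ℕ, T (f (i + (n : ℕ))) v := by
          intro n
          induction n with
          | zero => simpa using hi
          | succ n ihn =>
            have := hA v hv _ ihn
            push_cast
            rw [← add_assoc]
            refine tour_or hT ?_ this
            rintro rfl
            simp [hF] at hv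
        intro j
        have h := this (j - i).val
        simpa using h
      set O := (S \ F).filter (fun v => ∀ j, T (f j) v) with hO
      obtain ⟨x, hx, o, ho, hxo⟩ := hS F hFS hFne hFneS
      have hoO : o ∈ O := by
        rw [hFr] at hx
        obtain ⟨i, rfl⟩ := hx
        exact Finset.mem_filter.2 ⟨ho, key o ho i hxo⟩
      obtain ⟨w, hw, y, hy, hwy⟩ := hS (S \ F) Finset.sdiff_subset ⟨o, ho⟩
        (by intro h; obtain ⟨z, hz⟩ := hFne; have := hFS hz; rw [← h] at this; simp [hz] at this)
      have hwO : w ∉ O := by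
        intro h
        have hyF : y ∈ F := by simp at hy hw; tauto
        rw [hFr] at hyF
        obtain ⟨i, rfl⟩ := hyF
        exact tour_asymm hT ((Finset.mem_filter.1 h).2 i) hwy
      obtain ⟨a, ha, b, hb, hab⟩ := hS (F ∪ O)
        (Finset.union_subset hFS ((Finset.filter_subset _ _).trans Finset.sdiff_subset))
        (hFne.mono Finset.subset_union_left) (by
          intro h
          have hw' := hw
          rw [Finset.mem_sdiff, ← h, Finset.mem_union] at hw'
          tauto)
      simp only [Finset.mem_sdiff, Finset.mem_union, not_or] at hb
      have hbSF : b ∈ S \ F := Finset.mem_sdiff.2 ⟨hb.1, hb.2.1⟩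
      have hbf : ∀ j, T b (f j) := by
        intro j
        refine tour_or hT ?_ ?_
        · rintro rfl; exact hb.2.1 (by simp [hF])
        · intro h; exact hb.2.2 (Finset.mem_filter.2 ⟨hbSF, key b hbSF j h⟩)
      have haO : a ∈ O := by
        rcases Finset.mem_union.1 ha with h | h
        · rw [hFr] at h; obtain ⟨i, rfl⟩ := h
          exact absurd hab (tour_asymm hT (hbf i))
        · exact h
      obtain ⟨ha1, ha2⟩ := Finset.mem_filter.1 haO
      have n1 : a ≠ b := by rintro rfl; exact hT.1 _ hab
      have hcyc := arc_extend hf 0 (t := m - 2) (by omega) a [b] (by simp [n1])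
        (by
          intro z hz
          simp only [List.mem_cons, List.not_mem_nil, or_false] at hz
          rw [← hFr]
          rcases hz with rfl | rfl
          · exact (Finset.mem_sdiff.1 ha1).2
          · exact hb.2.1) (by simpa using hab) (by simpa using hbf 0) (ha2 _)
      obtain ⟨c, hc, hr⟩ := listCyc_toFun hcyc (q := m + 1) (by simp [arcList]; omega)
      refine ⟨c, hc, ?_⟩
      intro z hz
      rw [hr] at hz
      simp only [List.mem_append, List.mem_cons, List.not_mem_nil, or_false] at hz
      rcases hz with (rfl | rfl) | hz
      · exact (Finset.mem_sdiff.1 ha1).1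
      · exact hb.1
      · exact hfS (arcList_mem _ _ _ hz)

/-- Redei: Hamiltonian paths -/
theorem hamList {V : Type*} [DecidableEq V] {T : V → V → Prop} (hT : IsTournament T)
    (S : Finset V) : ∃ l : List V, l.Nodup ∧ l.IsChain T ∧ ∀ x, x ∈ l ↔ x ∈ S := by
  classical
  induction S using Finset.strongInduction with
  | H S ih =>
    rcases S.eq_empty_or_nonempty with rfl | ⟨v, hv⟩
    · exact ⟨[], by simp⟩
    obtain ⟨l1, n1, c1, m1⟩ := ih (S.filter (fun y => T y v))
      (Finset.filter_ssubset.2 ⟨v, hv, hT.1 v⟩)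
    obtain ⟨l2, n2, c2, m2⟩ := ih (S.filter (fun y => T v y))
      (Finset.filter_ssubset.2 ⟨v, hv, hT.1 v⟩)
    simp only [Finset.mem_filter] at m1 m2
    refine ⟨l1 ++ v :: l2, ?_, ?_, ?_⟩
    · rw [List.nodup_append', List.nodup_cons]
      refine ⟨n1, ⟨fun h => hT.1 v ((m2 v).1 h).2, n2⟩, ?_⟩
      intro x hx hx'
      rw [m1] at hx
      rcases List.mem_cons.1 hx' with rfl | h
      · exact hT.1 _ hx.2
      · exact tour_asymm hT hx.2 ((m2 _).1 h).2
    · rw [List.isChain_append]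
      refine ⟨c1, ?_, ?_⟩
      · rw [List.isChain_cons]
        refine ⟨fun y hy => ((m2 y).1 (List.mem_of_mem_head? hy)).2, c2⟩
      · intro x hx y hy
        simp at hy; subst hy
        exact ((m1 x).1 (List.mem_of_mem_getLast? hx)).2
    · intro x
      simp only [List.mem_append, List.mem_cons, m1, m2]
      constructor
      · rintro (h | rfl | h); exacts [h.1, hv, h.1]
      · intro h
        by_cases e : x = v
        · exact Or.inr (Or.inl e)
        · by_cases hxv : T x v
          · exact Or.inl ⟨h, hxv⟩
          · exact Or.inr (Or.inr ⟨h, tour_or hT e hxv⟩)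

/-- `X` has no out-arcs to the rest of `U` -/
def Closed {V : Type*} (T : V → V → Prop) (U X : Finset V) : Prop :=
  X ⊆ U ∧ ∀ x ∈ X, ∀ y ∈ U, y ∉ X → ¬ T x y

theorem closed_ext {V : Type*} [DecidableEq V] {T : V → V → Prop} (hT : IsTournament T)
    {U : Finset V} {q : ℕ} (hq : 3 ≤ q)
    (hno : ¬ ∃ f : ZMod q → V, IsCycle T q f ∧ Set.range f ⊆ U)
    {X0 : Finset V} (h0 : Closed T U X0) {m : ℕ} (hm : X0.card < m) (hmU : m ≤ U.card) :
    ∃ Y, Closed T U Y ∧ X0 ⊆ Y ∧ m ≤ Y.card ∧ Y.card + 2 ≤ m + q := by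
  classical
  -- maximal closed set of size < m containing X0
  obtain ⟨X, hX, hXmax⟩ := Finset.exists_max_image
    (U.powerset.filter (fun X => Closed T U X ∧ X0 ⊆ X ∧ X.card < m)) Finset.card
    ⟨X0, by simp [h0, h0.1, hm]⟩
  simp only [Finset.mem_filter, Finset.mem_powerset] at hX hXmax
  obtain ⟨hXU, hXc, hX0, hXm⟩ := hX
  obtain ⟨Y, hY, hYmin⟩ := Finset.exists_min_image
    (U.powerset.filter (fun Y => Closed T U Y ∧ X ⊂ Y)) Finset.card
    ⟨U, by
      simp only [Finset.mem_filter, Finset.mem_powerset]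
      refine ⟨subset_rfl, ⟨subset_rfl, fun x _ y hy hy' => absurd hy hy'⟩, ?_⟩
      refine Finset.ssubset_iff_subset_ne.2 ⟨hXU, ?_⟩
      rintro rfl; omega⟩
  simp only [Finset.mem_filter, Finset.mem_powerset] at hY hYmin
  obtain ⟨hYU, hYc, hXY⟩ := hY
  have hlt := Finset.card_lt_card hXY
  have hm' : m ≤ Y.card := by
    by_contra hcon
    have := hXmax Y ⟨hYU, hYc, hX0.trans hXY.1, by omega⟩
    omega
  have hstr : Strong T (Y \ X) := by
    intro Z hZ hZne hZneq
    by_contra hcon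
    push Not at hcon
    have hcl : Closed T U (X ∪ Z) := by
      refine ⟨Finset.union_subset hXU (hZ.trans (Finset.sdiff_subset.trans hYU)), ?_⟩
      intro x hx y hy hyn
      simp only [Finset.mem_union, not_or] at hx hyn
      rcases hx with hx | hx
      · exact hXc.2 x hx y hy hyn.1
      · by_cases hyY : y ∈ Y
        · exact hcon x hx y (by simp [hyY, hyn])
        · exact hYc.2 x (Finset.sdiff_subset (hZ hx)) y hy hyY
    have hss : X ⊂ X ∪ Z := by
      refine Finset.ssubset_iff_subset_ne.2 ⟨Finset.subset_union_left, ?_⟩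
      intro h
      obtain ⟨z, hz⟩ := hZne
      have h1 := Finset.mem_sdiff.1 (hZ hz)
      apply h1.2
      rw [h]; simp [hz]
    have h1 := hYmin _ ⟨hcl.1, hcl, hss⟩
    have h2 : Z ⊂ Y \ X := Finset.ssubset_iff_subset_ne.2 ⟨hZ, hZneq⟩
    have h3 := Finset.card_lt_card h2
    have h4 := Finset.card_union_le X Z
    have h5 := Finset.card_sdiff_add_card_eq_card hXY.1
    omega
  have hsmall : (Y \ X).card < q := by
    by_contra hcon
    obtain ⟨f, hf, hfs⟩ := moon hT hstr q hq (by omega)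
    exact hno ⟨f, hf, hfs.trans (by exact_mod_cast Finset.sdiff_subset.trans hYU)⟩
  have h5 := Finset.card_sdiff_add_card_eq_card hXY.1
  exact ⟨Y, hYc, hX0.trans hXY.1, hm', by omega⟩

open Classical in
/-- number of arcs from `X` to `Y`, as an integer -/
noncomputable def ee {V : Type*} (T : V → V → Prop) (X Y : Finset V) : ℤ :=
  ∑ x ∈ X, ∑ y ∈ Y, if T x y then 1 else 0

theorem ee_comm_add {V : Type*} {T : V → V → Prop} (hT : IsTournament T)
    {X Y : Finset V} (h : Disjoint X Y) : ee T X Y + ee T Y X = X.card * Y.card := by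
  classical
  unfold ee
  rw [Finset.sum_comm (s := Y), ← Finset.sum_add_distrib]
  have : ∀ x ∈ X, ((∑ y ∈ Y, if T x y then (1 : ℤ) else 0) + ∑ y ∈ Y, if T y x then (1 : ℤ) else 0) = Y.card := by
    intro x hx
    rw [← Finset.sum_add_distrib, Finset.card_eq_sum_ones]
    push_cast
    refine Finset.sum_congr rfl fun y hy => ?_
    have hne : x ≠ y := by rintro rfl; exact Finset.disjoint_left.1 h hx hy
    have := hT.2 x y hne
    by_cases h1 : T x y <;> simp_all
  rw [Finset.sum_congr rfl this]
  simp

theorem ee_self {V : Type*} {T : V → V → Prop} (hT : IsTournament T)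
    (X : Finset V) : 2 * ee T X X = X.card * (X.card - 1) := by
  classical
  have e : 2 * ee T X X = ee T X X + ee T X X := by ring
  rw [e]
  unfold ee
  nth_rewrite 2 [Finset.sum_comm]
  rw [← Finset.sum_add_distrib]
  have : ∀ x ∈ X, ((∑ y ∈ X, if T x y then (1 : ℤ) else 0) + ∑ y ∈ X, if T y x then (1 : ℤ) else 0) = (X.card - 1 : ℤ) := by
    intro x hx
    rw [← Finset.sum_add_distrib, ← Finset.add_sum_erase _ _ hx]
    have h2 : ∑ y ∈ X.erase x, ((if T x y then (1 : ℤ) else 0) + if T y x then (1 : ℤ) else 0) = ∑ y ∈ X.erase x, 1 := by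
      refine Finset.sum_congr rfl fun y hy => ?_
      have hne : x ≠ y := (Finset.ne_of_mem_erase hy).symm
      have := hT.2 x y hne
      by_cases h1 : T x y <;> simp_all
    rw [h2]
    have hp : 1 ≤ X.card := Finset.card_pos.2 ⟨x, hx⟩
    simp [hT.1 x, Finset.card_erase_of_mem hx, hp]
  rw [Finset.sum_congr rfl this]
  simp
  ring

theorem ee_union_right {V : Type*} [DecidableEq V] {T : V → V → Prop}
    {X Y Z : Finset V} (h : Disjoint Y Z) : ee T X (Y ∪ Z) = ee T X Y + ee T X Z := by
  unfold ee
  rw [← Finset.sum_add_distrib]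
  exact Finset.sum_congr rfl fun x _ => Finset.sum_union h

theorem ee_nonneg {V : Type*} (T : V → V → Prop) (X Y : Finset V) : 0 ≤ ee T X Y := by
  unfold ee
  exact Finset.sum_nonneg fun x _ => Finset.sum_nonneg fun y _ => by split_ifs <;> simp

theorem ee_mono_left {V : Type*} {T : V → V → Prop} {X X' : Finset V} (h : X ⊆ X') (Y : Finset V) :
    ee T X Y ≤ ee T X' Y := by
  unfold ee
  exact Finset.sum_le_sum_of_subset_of_nonneg h fun x _ _ =>
    Finset.sum_nonneg fun y _ => by split_ifs <;> simp

theorem ee_le {V : Type*} (T : V → V → Prop) (X Y : Finset V) : ee T X Y ≤ X.card * Y.card := by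
  unfold ee
  calc _ ≤ ∑ x ∈ X, ∑ y ∈ Y, (1 : ℤ) :=
        Finset.sum_le_sum fun x _ => Finset.sum_le_sum fun y _ => by split_ifs <;> simp
    _ = _ := by simp

theorem ee_deg {V : Type*} [Fintype V] {T : V → V → Prop} {d : ℕ}
    (hdeg : ∀ v, d ≤ outDeg T v) (X : Finset V) : (X.card : ℤ) * d ≤ ee T X Finset.univ := by
  classical
  unfold ee
  calc (X.card : ℤ) * d = ∑ x ∈ X, (d : ℤ) := by simp
    _ ≤ _ := by
      refine Finset.sum_le_sum fun x _ => ?_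
      have := hdeg x
      unfold outDeg at this
      rw [Set.ncard_eq_toFinset_card'] at this
      rw [Finset.sum_boole]
      simpa using this

/-- arcs from the complement of `U` into a closed set -/
theorem ee_closed {V : Type*} [Fintype V] [DecidableEq V] {T : V → V → Prop} (hT : IsTournament T)
    {d : ℕ} (hdeg : ∀ v, d ≤ outDeg T v) {W X : Finset V} (hX : Closed T Wᶜ X) :
    2 * ee T W X ≤ X.card * (2 * W.card - 2 * d + (X.card - 1)) := by
  have hd : Disjoint W X := by
    rw [Finset.disjoint_left]; intro x hx hx'
    simpa [hx] using hX.1 hx'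
  have h1 := ee_deg hdeg X
  have h2 : ee T X Finset.univ = ee T X W + ee T X X := by
    rw [← ee_union_right hd]
    unfold ee
    refine Finset.sum_congr rfl fun x hx => ?_
    symm
    refine Finset.sum_subset (Finset.subset_univ _) fun y _ hy => ?_
    simp only [Finset.mem_union, not_or] at hy
    rw [if_neg]
    exact hX.2 x hx y (by simp [hy.1]) hy.2
  have h3 := ee_self hT X
  have h4 := ee_comm_add hT hd
  rw [h2] at h1
  nlinarith

/-- the basic new cycle -/
theorem newCycle {V : Type*} [DecidableEq V] {T : V → V → Prop} (hT : IsTournament T)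
    {q : ℕ} {M : Finset V} (hM : M.card + 3 = q) {c a b : V} (hca : T c a) (hbc : T b c)
    (hab : T a b)
    (haM : ∀ x ∈ M, T a x) (hMb : ∀ x ∈ M, T x b) (hcM : c ∉ M) :
    ∃ f : ZMod q → V, IsCycle T q f ∧ ∀ x, x ∈ Set.range f ↔ (x = c ∨ x = a ∨ x = b ∨ x ∈ M) := by
  obtain ⟨l, hn, hch, hl⟩ := hamList hT M
  have hlen : l.length = M.card := by
    rw [← List.toFinset_card_of_nodup hn]
    congr 1; ext x; simp [hl]
  have n1 : c ≠ a := by rintro rfl; exact hT.1 _ hca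
  have n2 : b ≠ c := by rintro rfl; exact hT.1 _ hbc
  have n3 : a ≠ b := by rintro rfl; exact hT.1 _ hab
  have n4 : a ∉ M := fun h => hT.1 _ (haM _ h)
  have n5 : b ∉ M := fun h => hT.1 _ (hMb _ h)
  have hcyc : ListCyc T (b :: c :: a :: l) := by
    refine ⟨?_, b, c :: a :: l, rfl, ?_⟩
    · simp [hl, hn, n1, n2, n3.symm, n4, n5, hcM]
    · have : b :: c :: a :: l ++ [b] = [b, c, a] ++ (l ++ [b]) := by simp
      rw [this, List.isChain_append, List.isChain_append]
      refine ⟨by simp [hbc, hca], ⟨hch, by simp, ?_⟩, ?_⟩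
      · intro x hx y hy
        simp at hy; subst hy
        exact hMb _ ((hl x).1 (List.mem_of_mem_getLast? hx))
      · intro x hx y hy
        simp at hx; subst hx
        have := List.mem_of_mem_head? hy
        simp [hl] at this
        rcases this with h | rfl
        · exact haM _ h
        · exact hab
  obtain ⟨f, hf, hr⟩ := listCyc_toFun hcyc (q := q) (by simp [hlen]; omega)
  refine ⟨f, hf, fun x => ?_⟩
  rw [hr]
  simp [hl]
  tauto

theorem assemble {V : Type*} [Fintype V] {T : V → V → Prop} {q n : ℕ} (hq : 0 < q)
    (C C' : Fin n → ZMod q → V) (hC' : ∀ j, IsCycle T q (C' j)) (hdisj : DisjointCycles C')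
    (d d' : ZMod q → V) (hd : IsCycle T q d)
    (hdd : ∀ j, Disjoint (Set.range d) (Set.range (C' j)))
    (hsub : ∀ j, C' j = C j ∨ C' j = d') :
    ∃ D : Fin (n + 1) → ZMod q → V, (∀ j, IsCycle T q (D j)) ∧ DisjointCycles D ∧
      ((⋃ j, Set.range (D j)) ∩ (⋃ j, Set.range (C j))ᶜ).ncard ≤ 3 * q := by
  haveI : NeZero q := ⟨by omega⟩
  refine ⟨Fin.cons d C', ?_, ?_, ?_⟩
  · intro j
    refine Fin.cases ?_ (fun i => ?_) j
    · simpa using hd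
    · simpa using hC' i
  · intro j j'
    refine Fin.cases ?_ (fun i => ?_) j <;> refine Fin.cases ?_ (fun i' => ?_) j'
    · simp
    · intro _; simpa using hdd i'
    · intro _; simpa using (hdd i).symm
    · intro h
      have : i ≠ i' := by rintro rfl; exact h rfl
      simpa using hdisj i i' this
  · have hr : ∀ g : ZMod q → V, (Set.range g).ncard ≤ q := by
      intro g
      rw [← Set.image_univ]
      refine (Set.ncard_image_le Set.finite_univ).trans ?_
      simp [Set.ncard_univ]
    have hs : ((⋃ j, Set.range ((Fin.cons d C' : Fin (n + 1) → ZMod q → V) j)) ∩ (⋃ j, Set.range (C j))ᶜ)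
        ⊆ Set.range d ∪ Set.range d' := by
      rintro x ⟨hx, hx'⟩
      obtain ⟨j, hj⟩ := Set.mem_iUnion.1 hx
      revert hj
      refine Fin.cases ?_ (fun i => ?_) j
      · intro h; left; simpa using h
      · intro h
        rw [Fin.cons_succ] at h
        rcases hsub i with e | e
        · exact absurd (Set.mem_iUnion.2 ⟨i, e ▸ h⟩) hx'
        · right; exact e ▸ h
    have h1 := Set.ncard_le_ncard hs (Set.toFinite _)
    have h2 := Set.ncard_union_le (Set.range d) (Set.range d')
    have h3 := hr d
    have h4 := hr d'
    omega

theorem arith {b y w bad h Q N eB eY eY' eA eS eR : ℤ}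
    (hBe : 2 * eB ≤ b * (2 * (N * Q) - 2 * ((Q - 1) * (N + 1) - 1) + (b - 1)))
    (hYe : 2 * eY ≤ y * (2 * (N * Q) - 2 * ((Q - 1) * (N + 1) - 1) + (y - 1)))
    (hBadc : bad * (b - 1) ≤ eB) (h1 : 2 * eS = w * (w - 1)) (h2 : eR ≤ w * (h + bad))
    (h3 : eY' ≤ eY) (h4 : eA ≤ w)
    (hdW' : w * ((Q - 1) * (N + 1) - 1) ≤ eS + eR + eY' + eA)
    (hB2 : 2 ≤ b) (hBq : b ≤ Q) (hYq : y ≤ 4 * Q - 8) (hq : 10 ≤ Q) (hn : 10 ≤ N)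
    (hHn : h ≤ N) (hcZ : w + h + bad = N * Q) (hBad0 : 0 ≤ bad) (hY0 : 0 ≤ y) (hW0 : 0 ≤ w) :
    False := by
  have hb1 : 2 * bad * (b - 1) ≤ b * (2 * N + 3 - Q) := by
    have e : b * (2 * (N * Q) - 2 * ((Q - 1) * (N + 1) - 1) + (b - 1)) =
      b * (2 * N + 3 - 2 * Q + b) := by ring
    have e2 : b * (2 * N + 3 - 2 * Q + b) ≤ b * (2 * N + 3 - Q) :=
      mul_le_mul_of_nonneg_left (by linarith) (by linarith)
    linarith
  have hpos : 0 ≤ 2 * N + 3 - Q := by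
    by_contra hc
    push Not at hc
    have : 0 ≤ 2 * bad * (b - 1) := mul_nonneg (by linarith) (by linarith)
    nlinarith
  have hbad : bad ≤ 2 * N + 3 - Q := by
    have : bad * (b - 1) ≤ (2 * N + 3 - Q) * (b - 1) := by nlinarith
    exact le_of_mul_le_mul_right this (by linarith)
  have hyy : 2 * eY ≤ (4 * Q - 8) * (2 * N + 2 * Q - 5) := by
    have e : y * (2 * (N * Q) - 2 * ((Q - 1) * (N + 1) - 1) + (y - 1)) =
      y * (2 * N + 3 - 2 * Q + y) := by ring
    have e2 : y * (2 * N + 3 - 2 * Q + y) ≤ y * (2 * N + 2 * Q - 5) :=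
      mul_le_mul_of_nonneg_left (by linarith) hY0
    have e3 : y * (2 * N + 2 * Q - 5) ≤ (4 * Q - 8) * (2 * N + 2 * Q - 5) :=
      mul_le_mul_of_nonneg_right hYq (by linarith)
    linarith
  have hmain : w * (2 * ((Q - 1) * (N + 1) - 1) - (w - 1) - 2 * (h + bad) - 2) ≤ 2 * eY := by
    linarith
  have hwl : (Q - 3) * (N + 1) ≤ w := by linarith
  have hbr : (Q - 5) * (N + 1) + 2 * Q - 3 ≤
      2 * ((Q - 1) * (N + 1) - 1) - (w - 1) - 2 * (h + bad) - 2 := by linarith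
  have hX : 2 * N + 2 * Q - 5 ≤ (Q - 5) * (N + 1) + 2 * Q - 3 := by nlinarith
  have hZ : 4 * Q - 8 < w := by nlinarith
  have hfin : (4 * Q - 8) * (2 * N + 2 * Q - 5) <
      w * (2 * ((Q - 1) * (N + 1) - 1) - (w - 1) - 2 * (h + bad) - 2) := by
    calc (4 * Q - 8) * (2 * N + 2 * Q - 5) < w * (2 * N + 2 * Q - 5) :=
          mul_lt_mul_of_pos_right hZ (by linarith)
      _ ≤ _ := mul_le_mul_of_nonneg_left (hX.trans hbr) hW0
  linarith

open Classical in
theorem mainAux {V : Type*} [Fintype V] {T : V → V → Prop} (hT : IsTournament T)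
    {q n : ℕ} (hq : 10 ≤ q) (hn : 10 ≤ n)
    (hdeg : ∀ v, (q - 1) * (n + 1) - 1 ≤ outDeg T v)
    (C : Fin n → ZMod q → V) (hC : ∀ j, IsCycle T q (C j)) (hdisj : DisjointCycles C) :
    ∃ D : Fin (n + 1) → ZMod q → V, (∀ j, IsCycle T q (D j)) ∧ DisjointCycles D ∧
      ((⋃ j, Set.range (D j)) ∩ (⋃ j, Set.range (C j))ᶜ).ncard ≤ 3 * q := by
  have : NeZero q := ⟨by omega⟩
  set d : ℕ := (q - 1) * (n + 1) - 1 with hd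
  have hdZ : (d : ℤ) = (q - 1) * (n + 1) - 1 := by
    have : 1 ≤ (q - 1) * (n + 1) := Nat.mul_pos (by omega) (by omega)
    rw [hd, Nat.cast_sub this]
    push_cast [Nat.cast_sub (show 1 ≤ q by omega)]
    ring
  have hinj : Function.Injective (fun p : Fin n × ZMod q => C p.1 p.2) := by
    rintro ⟨i, x⟩ ⟨j, y⟩ h
    simp only at h
    by_cases e : i = j
    · subst e; rw [(hC i).1 h]
    · exact absurd (show C i x ∈ Set.range (C j) from h ▸ ⟨y, rfl⟩)
        (Set.disjoint_left.1 (hdisj i j e) ⟨x, rfl⟩)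
  set W : Finset V := Finset.univ.image (fun p : Fin n × ZMod q => C p.1 p.2) with hW
  have hWc : W.card = n * q := by
    rw [hW, Finset.card_image_of_injective _ hinj]; simp
  have hWm : ∀ x, x ∈ W ↔ ∃ j, x ∈ Set.range (C j) := by
    intro x; simp [hW, Set.mem_range]
  by_cases hno : ∃ f : ZMod q → V, IsCycle T q f ∧ Set.range f ⊆ (Wᶜ : Finset V)
  · obtain ⟨f, hf, hfs⟩ := hno
    refine assemble (by omega) C C hC hdisj f f hf (fun j => ?_) (fun j => Or.inl rfl)
    rw [Set.disjoint_left]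
    intro x hx hx'
    have h1 := hfs hx
    have h2 := (hWm x).2 ⟨j, hx'⟩
    simp [h2] at h1
  -- the size of the complement
  have hcard : 2 * (d : ℤ) + 1 ≤ Fintype.card V := by
    have h1 := ee_deg hdeg Finset.univ
    have h2 := ee_self hT (Finset.univ : Finset V)
    rw [Finset.card_univ] at h1 h2
    have h3 : W.card ≤ Fintype.card V := Finset.card_le_univ W
    have h4 : 0 < W.card := by rw [hWc]; exact Nat.mul_pos (by omega) (by omega)
    have h5 : (0 : ℤ) < Fintype.card V := by exact_mod_cast h4.trans_le h3
    nlinarith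
  have hUW : (Wᶜ.card : ℤ) + n * q = Fintype.card V := by
    have := Finset.card_compl_add_card W
    rw [hWc] at this
    exact_mod_cast this
  have hUc : 3 * q ≤ Wᶜ.card := by
    zify
    have h1 : (10 : ℤ) ≤ q := by exact_mod_cast hq
    have h2 : (10 : ℤ) ≤ n := by exact_mod_cast hn
    nlinarith
  have hemp : Closed T Wᶜ ∅ := ⟨by simp, by simp⟩
  obtain ⟨B, hB, -, hB2, hBq⟩ := closed_ext hT (by omega) hno hemp (m := 2) (by simp) (by omega)
  obtain ⟨Y, hY, hBY, hYl, hYu⟩ := closed_ext hT (by omega) hno hB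
    (m := B.card + 2 * (q - 3)) (by omega) (by omega)
  set A : Finset V := Wᶜ \ Y with hA
  have hMc : 2 * (q - 3) ≤ (Y \ B).card := by
    have := Finset.card_sdiff_add_card_eq_card hBY
    omega
  -- bad vertices
  set Bad : Finset V := W.filter (fun c => (B.filter (fun b => T b c)).card ≤ 1) with hBad
  set H : Finset V := (W \ Bad).filter (fun c => 2 ≤ (A.filter (fun a => T c a)).card) with hH
  by_cases hHc : n < H.card
  · -- construct
    have hidx : ∀ x : V, ∃ j : Fin n, x ∈ W → x ∈ Set.range (C j) := by
      intro x
      by_cases hx : x ∈ W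
      · obtain ⟨j, hj⟩ := (hWm x).1 hx
        exact ⟨j, fun _ => hj⟩
      · exact ⟨⟨0, by omega⟩, fun h => absurd h hx⟩
    choose g hg using hidx
    obtain ⟨c1, hc1, c2, hc2, hne, hgg⟩ := Finset.exists_ne_map_eq_of_card_lt_of_maps_to
      (s := H) (t := (Finset.univ : Finset (Fin n))) (by simpa using hHc) (f := g) (by simp)
    simp only [hH, Finset.mem_filter, Finset.mem_sdiff, hBad, not_and, not_le] at hc1 hc2
    obtain ⟨⟨hc1W, hc1B⟩, hc1A⟩ := hc1
    obtain ⟨⟨hc2W, hc2B⟩, hc2A⟩ := hc2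
    replace hc1B := hc1B hc1W
    replace hc2B := hc2B hc2W
    have pick : ∀ s t : Finset V, 1 < s.card → 1 < t.card → ∃ x ∈ s, ∃ y ∈ t, x ≠ y := by
      intro s t hs ht
      obtain ⟨x, hx⟩ := Finset.card_pos.1 (by omega : 0 < s.card)
      obtain ⟨y, hy, hyx⟩ := Finset.exists_mem_ne ht x
      exact ⟨x, hx, y, hy, hyx.symm⟩
    obtain ⟨a1, ha1, a2, ha2, haa⟩ := pick _ _ hc1A hc2A
    obtain ⟨b1, hb1, b2, hb2, hbb⟩ := pick _ _ hc1B hc2B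
    obtain ⟨M1, hM1, hM1c⟩ := Finset.exists_subset_card_eq (s := Y \ B) (n := q - 3) (by omega)
    obtain ⟨M2, hM2, hM2c⟩ := Finset.exists_subset_card_eq (s := (Y \ B) \ M1) (n := q - 3) (by
      have := Finset.card_sdiff_add_card_eq_card hM1
      omega)
    simp only [Finset.mem_filter] at ha1 ha2 hb1 hb2
    have hWn : ∀ x ∈ Wᶜ, x ∉ W := fun x hx => by simpa using hx
    have hAY : ∀ a ∈ A, ∀ y ∈ Y, T a y := by
      intro a ha y hy
      have ha' := Finset.mem_sdiff.1 ha
      refine tour_or hT ?_ (hY.2 y hy a ha'.1 ha'.2)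
      rintro rfl; exact ha'.2 hy
    have hMB : ∀ x ∈ Y \ B, ∀ b ∈ B, T x b := by
      intro x hx b hb
      have hx' := Finset.mem_sdiff.1 hx
      refine tour_or hT ?_ (hB.2 b hb x (hY.1 hx'.1) hx'.2)
      rintro rfl; exact hx'.2 hb
    have hM2' : M2 ⊆ Y \ B := hM2.trans Finset.sdiff_subset
    have hMW : ∀ x ∈ Y \ B, x ∉ W := fun x hx => hWn x (hY.1 (Finset.sdiff_subset hx))
    obtain ⟨f1, hf1, hr1⟩ := newCycle hT (q := q) (M := M1) (by omega) ha1.2 hb1.2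
      (hAY _ ha1.1 _ (hBY hb1.1)) (fun x hx => hAY _ ha1.1 _ (Finset.sdiff_subset (hM1 hx)))
      (fun x hx => hMB x (hM1 hx) _ hb1.1) (fun h => hMW _ (hM1 h) hc1W)
    obtain ⟨f2, hf2, hr2⟩ := newCycle hT (q := q) (M := M2) (by omega) ha2.2 hb2.2
      (hAY _ ha2.1 _ (hBY hb2.1)) (fun x hx => hAY _ ha2.1 _ (Finset.sdiff_subset (hM2' hx)))
      (fun x hx => hMB x (hM2' hx) _ hb2.1) (fun h => hMW _ (hM2' h) hc2W)
    have hAW : ∀ a ∈ A, a ∉ W := fun a ha => hWn a (Finset.sdiff_subset ha)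
    have hBW : ∀ b ∈ B, b ∉ W := fun a ha => hWn a (hB.1 ha)
    have hAnY : ∀ a ∈ A, a ∉ Y := fun a ha => (Finset.mem_sdiff.1 ha).2
    have w1 : ∀ x ∈ Set.range f1, x ∈ W → x = c1 := by
      intro x hx hxW
      rw [hr1] at hx
      rcases hx with h | rfl | rfl | h
      · exact h
      · exact absurd hxW (hAW _ ha1.1)
      · exact absurd hxW (hBW _ hb1.1)
      · exact absurd hxW (hMW _ (hM1 h))
    have w2 : ∀ x ∈ Set.range f2, x ∈ W → x = c2 := by
      intro x hx hxW
      rw [hr2] at hx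
      rcases hx with h | rfl | rfl | h
      · exact h
      · exact absurd hxW (hAW _ ha2.1)
      · exact absurd hxW (hBW _ hb2.1)
      · exact absurd hxW (hMW _ (hM2' h))
    have hg1 := hg c1 hc1W
    have hg2 := hg c2 hc2W
    rw [← hgg] at hg2
    set j0 := g c1 with hj0
    have o1 : ∀ j, j ≠ j0 → Disjoint (Set.range f1) (Set.range (C j)) := by
      intro j hj
      rw [Set.disjoint_left]
      intro x hx hx'
      have := w1 x hx ((hWm x).2 ⟨j, hx'⟩)
      subst this
      exact Set.disjoint_left.1 (hdisj j j0 hj) hx' hg1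
    have o2 : ∀ j, j ≠ j0 → Disjoint (Set.range f2) (Set.range (C j)) := by
      intro j hj
      rw [Set.disjoint_left]
      intro x hx hx'
      have := w2 x hx ((hWm x).2 ⟨j, hx'⟩)
      subst this
      exact Set.disjoint_left.1 (hdisj j j0 hj) hx' hg2
    have o12 : Disjoint (Set.range f1) (Set.range f2) := by
      rw [Set.disjoint_left]
      intro x hx hx'
      by_cases hxW : x ∈ W
      · exact hne ((w1 x hx hxW).symm.trans (w2 x hx' hxW))
      · rw [hr1] at hx
        rw [hr2] at hx'
        have s1 := ha1.1
        have s2 := ha2.1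
        have s3 := hb1.1
        have s4 := hb2.1
        rcases hx with rfl | rfl | rfl | h
        · exact hxW hc1W
        · rcases hx' with rfl | h' | rfl | h'
          · exact hxW hc2W
          · exact haa h'
          · exact hAnY _ s1 (hBY s4)
          · exact hAnY _ s1 (Finset.sdiff_subset (hM2' h'))
        · rcases hx' with rfl | rfl | h' | h'
          · exact hxW hc2W
          · exact hAnY _ s2 (hBY s3)
          · exact hbb h'
          · exact (Finset.mem_sdiff.1 (hM2' h')).2 s3
        · rcases hx' with rfl | rfl | rfl | h'
          · exact hxW hc2W
          · exact hAnY _ s2 (Finset.sdiff_subset (hM1 h))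
          · exact (Finset.mem_sdiff.1 (hM1 h)).2 s4
          · exact (Finset.mem_sdiff.1 (hM2 h')).2 h
    refine assemble (by omega) C (Function.update C j0 f2) ?_ ?_ f1 f2 hf1 ?_ ?_
    · intro j
      by_cases e : j = j0
      · subst e; simpa using hf2
      · simpa [Function.update_of_ne e] using hC j
    · intro j j' hjj
      by_cases e : j = j0
      · subst e
        rw [Function.update_self, Function.update_of_ne hjj.symm]
        exact o2 j' hjj.symm
      · rw [Function.update_of_ne e]
        by_cases e' : j' = j0
        · subst e'
          rw [Function.update_self]
          exact (o2 j e).symm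
        · rw [Function.update_of_ne e']
          exact hdisj j j' hjj
    · intro j
      by_cases e : j = j0
      · subst e; rw [Function.update_self]; exact o12
      · rw [Function.update_of_ne e]; exact o1 j e
    · intro j
      by_cases e : j = j0
      · subst e; right; simp
      · left; simp [Function.update_of_ne e]
  · -- counting contradiction
    exfalso
    have hBe := ee_closed hT hdeg hB
    have hYe := ee_closed hT hdeg hY
    have hBadW : Bad ⊆ W := Finset.filter_subset _ _
    have hBadc : (Bad.card : ℤ) * (B.card - 1) ≤ ee T W B := by
      refine le_trans ?_ (ee_mono_left hBadW B)
      unfold ee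
      calc (Bad.card : ℤ) * (B.card - 1) = ∑ x ∈ Bad, ((B.card : ℤ) - 1) := by simp; ring
        _ ≤ _ := by
          refine Finset.sum_le_sum fun x hx => ?_
          rw [Finset.sum_boole]
          have hx' := Finset.mem_filter.1 hx
          have h1 := Finset.card_filter_add_card_filter_not (s := B) (fun b => T b x)
          have h2 : B.filter (fun b => ¬ T b x) = B.filter (fun b => T x b) := by
            refine Finset.filter_congr fun b hb => ?_
            refine (hT.2 x b ?_).symm
            rintro rfl
            have := hB.1 hb
            simp [hx'.1] at this
          rw [h2] at h1
          push_cast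
          have h3 := hx'.2
          omega
    set W' := (W \ Bad) \ H with hW'
    have hHW : H ⊆ W \ Bad := Finset.filter_subset _ _
    have hcW' : W'.card + H.card + Bad.card = n * q := by
      have h1 : W'.card + H.card = (W \ Bad).card := Finset.card_sdiff_add_card_eq_card hHW
      have h2 := Finset.card_sdiff_add_card_eq_card hBadW
      omega
    have hW'W : W' ⊆ W := Finset.sdiff_subset.trans Finset.sdiff_subset
    have hdW' := ee_deg hdeg W'
    have hR : ee T W' Finset.univ = ee T W' W' + ee T W' (W \ W') + ee T W' Y + ee T W' A := by
      have e1 : (Finset.univ : Finset V) = ((W' ∪ (W \ W')) ∪ Y) ∪ A := by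
        ext x
        simp only [Finset.mem_univ, Finset.mem_union, Finset.mem_sdiff, hA, Finset.mem_compl, true_iff]
        tauto
      have hYW : ∀ x ∈ Y, x ∉ W := fun x hx => by simpa using hY.1 hx
      rw [e1, ee_union_right, ee_union_right, ee_union_right]
      · exact Finset.disjoint_sdiff
      · rw [Finset.union_sdiff_of_subset hW'W, Finset.disjoint_left]
        intro x hx hx'; exact hYW x hx' hx
      · rw [Finset.union_sdiff_of_subset hW'W, Finset.disjoint_left]
        intro x hx hx'
        simp only [hA, Finset.mem_sdiff, Finset.mem_compl] at hx'
        rcases Finset.mem_union.1 hx with h | h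
        · exact hx'.1 h
        · exact hx'.2 h
    have h1 := ee_self hT W'
    have h2 := ee_le T W' (W \ W')
    have h3 := ee_mono_left (T := T) hW'W Y
    have h4 : ee T W' A ≤ W'.card := by
      unfold ee
      calc _ ≤ ∑ x ∈ W', (1 : ℤ) := by
            refine Finset.sum_le_sum fun x hx => ?_
            rw [Finset.sum_boole]
            have hx1 := Finset.mem_sdiff.1 hx
            have hx2 : ¬ 2 ≤ (A.filter (fun a => T x a)).card := fun h =>
              hx1.2 (Finset.mem_filter.2 ⟨hx1.1, h⟩)
            have hx3 : (A.filter (fun a => T x a)).card ≤ 1 := by omega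
            exact_mod_cast hx3
        _ = _ := by simp
    have hc2 : (W \ W').card = H.card + Bad.card := by
      have := Finset.card_sdiff_add_card_eq_card hW'W
      omega
    rw [hR] at hdW'
    rw [hc2] at h2
    rw [hWc] at hBe hYe
    push_cast at hBe hYe h2
    rw [hdZ] at hBe hYe hdW'
    have hB2' : (2 : ℤ) ≤ B.card := by exact_mod_cast hB2
    have hBq' : (B.card : ℤ) ≤ q := by have : B.card ≤ q := by omega
                                       exact_mod_cast this
    have hYq : (Y.card : ℤ) ≤ 4 * q - 8 := by omega
    have hq' : (10 : ℤ) ≤ q := by exact_mod_cast hq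
    have hn' : (10 : ℤ) ≤ n := by exact_mod_cast hn
    have hHn : (H.card : ℤ) ≤ n := by exact_mod_cast not_lt.1 hHc
    have hcZ : (W'.card : ℤ) + H.card + Bad.card = n * q := by exact_mod_cast hcW'
    have hBad0 : (0 : ℤ) ≤ Bad.card := by positivity
    have hY0 : (0 : ℤ) ≤ Y.card := by positivity
    have hW0 : (0 : ℤ) ≤ W'.card := by positivity
    exact arith hBe hYe hBadc h1 h2 h3 h4 hdW' hB2' hBq' hYq hq' hn' hHn hcZ hBad0 hY0 hW0

theorem stmt2 {V : Type*} [Fintype V] (T : V → V → Prop) (hT : IsTournament T)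
    (q k : ℕ) (hq : 10 ≤ q) (hk : (3.3 : ℝ) * Real.sqrt q ≤ (k : ℝ))
    (hdeg : ∀ v, (q - 1) * k - 1 ≤ outDeg T v)
    (C : Fin (k - 1) → ZMod q → V) (hC : ∀ j, IsCycle T q (C j))
    (hdisj : DisjointCycles C) :
    ∃ D : Fin k → ZMod q → V, (∀ j, IsCycle T q (D j)) ∧ DisjointCycles D ∧
      ((⋃ j, Set.range (D j)) ∩ (⋃ j, Set.range (C j))ᶜ).ncard ≤ 3 * q := by
  have hk11 : 11 ≤ k := by
    have h1 : (3.1 : ℝ) ≤ Real.sqrt q := by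
      apply Real.le_sqrt_of_sq_le
      have : (10 : ℝ) ≤ q := by exact_mod_cast hq
      norm_num
      linarith
    have h2 : (10 : ℝ) < k := by linarith
    have : 10 < k := by exact_mod_cast h2
    omega
  obtain ⟨n, rfl⟩ : ∃ n, k = n + 1 := ⟨k - 1, by omega⟩
  exact mainAux hT hq (by omega) hdeg C hC hdisj
end

section
/- Let q ≥ 2 be an integer, let T be a tournament, and let S₁ and S₂ be disjoint sets of vertices of T with |S₁| = q + 1 and |S₂| = q. If the number of arcs from S₁ to S₂ is at least q² − q − 1, then there is a (q − 1)-matching from S₁ to S₂. -/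
open Set

theorem stmt4 {V : Type*} [Fintype V] (T : V → V → Prop) (hT : IsTournament T)
    (q : ℕ) (hq : 2 ≤ q) (S₁ S₂ : Set V) (hdisj : Disjoint S₁ S₂)
    (h1 : S₁.ncard = q + 1) (h2 : S₂.ncard = q)
    (harcs : q ^ 2 - q - 1 ≤ arcs T S₁ S₂) :
    HasMatching T S₁ S₂ (q - 1) := by
  classical
  obtain ⟨F1, rfl⟩ : ∃ F : Finset V, (F : Set V) = S₁ := ⟨S₁.toFinset, by simp⟩
  obtain ⟨F2, rfl⟩ : ∃ F : Finset V, (F : Set V) = S₂ := ⟨S₂.toFinset, by simp⟩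
  rw [Set.ncard_coe_finset] at h1 h2
  let N : {y // y ∈ F2} → Finset V := fun y => F1.filter (fun x => T x y)
  let t : {y // y ∈ F2} → Finset (Option V) := fun y => Finset.insertNone (N y)
  have hall : ∀ s : Finset {y // y ∈ F2}, s.card ≤ (s.biUnion t).card := by
    intro s
    by_contra hlt
    push Not at hlt
    have hsne : s.Nonempty := by
      rw [Finset.nonempty_iff_ne_empty]
      rintro rfl
      simp at hlt
    have hsub : Finset.insertNone (s.biUnion N) ⊆ s.biUnion t := by
      intro o ho
      rw [Finset.mem_biUnion]
      cases o with
      | none =>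
        obtain ⟨y, hy⟩ := hsne
        exact ⟨y, hy, by simp [t]⟩
      | some x =>
        rw [Finset.some_mem_insertNone, Finset.mem_biUnion] at ho
        obtain ⟨y, hy, hx⟩ := ho
        exact ⟨y, hy, by simpa [t] using hx⟩
    have hc := Finset.card_le_card hsub
    rw [Finset.card_insertNone] at hc
    let A : Finset V := s.map (Function.Embedding.subtype _)
    have hA : A.card = s.card := Finset.card_map _
    have hAF : A ⊆ F2 := by
      intro y hy
      simp only [A, Finset.mem_map, Function.Embedding.coe_subtype] at hy
      obtain ⟨z, _, rfl⟩ := hy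
      exact z.2
    have hle : arcs T (F1 : Set V) (F2 : Set V) ≤
        ((s.biUnion N) ×ˢ A ∪ F1 ×ˢ (F2 \ A)).card := by
      unfold arcs
      rw [← Set.ncard_coe_finset]
      apply Set.ncard_le_ncard _ (Finset.finite_toSet _)
      rintro ⟨x, y⟩ ⟨hx, hy, hxy⟩
      simp only [Finset.mem_coe] at hx hy
      simp only [Finset.mem_coe, Finset.mem_union, Finset.mem_product, Finset.mem_sdiff]
      by_cases hyA : y ∈ A
      · left
        refine ⟨?_, hyA⟩
        simp only [A, Finset.mem_map, Function.Embedding.coe_subtype] at hyA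
        obtain ⟨z, hz, rfl⟩ := hyA
        exact Finset.mem_biUnion.2 ⟨z, hz, Finset.mem_filter.2 ⟨hx, hxy⟩⟩
      · exact Or.inr ⟨hx, hy, hyA⟩
    have hle2 := hle.trans (Finset.card_union_le _ _)
    rw [Finset.card_product, Finset.card_product, Finset.card_sdiff_of_subset hAF, hA, h1, h2]
      at hle2
    have hsq : s.card ≤ q := by rw [← hA, ← h2]; exact Finset.card_le_card hAF
    have h3 := harcs.trans hle2
    generalize s.card = a at *
    generalize (s.biUnion N).card = n at *
    obtain ⟨m, rfl⟩ : ∃ m, a = m + 2 := ⟨a - 2, by omega⟩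
    obtain ⟨d, rfl⟩ : ∃ d, q = m + 2 + d := ⟨q - (m + 2), by omega⟩
    have hn : n ≤ m := by omega
    have h4 : n * (m + 2) ≤ m * (m + 2) := Nat.mul_le_mul_right _ hn
    have h5 : m + 2 + d - (m + 2) = d := by omega
    rw [h5] at h3
    have h6 : (m + 2 + d) ^ 2 ≤ m * (m + 2) + (m + 2 + d + 1) * d + (m + 2 + d) + 1 := by
      omega
    nlinarith [Nat.zero_le (m * d)]
  obtain ⟨f, hf, hft⟩ := (Finset.all_card_le_biUnion_card_iff_exists_injective t).1 hall
  obtain ⟨y0, hy0⟩ : ∃ y0, ∀ y, y ≠ y0 → f y ≠ none := by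
    by_cases h : ∃ y0, f y0 = none
    · obtain ⟨y0, h0⟩ := h
      exact ⟨y0, fun y hy hn => hy (hf (hn.trans h0.symm))⟩
    · push Not at h
      obtain ⟨y, hy⟩ : F2.Nonempty := Finset.card_pos.1 (by omega)
      exact ⟨⟨y, hy⟩, fun y _ => h y⟩
  have hg : ∀ y : {y // y ≠ y0}, ∃ x, f y.1 = some x := fun y =>
    Option.ne_none_iff_exists'.1 (hy0 y.1 y.2)
  choose g hg using hg
  have hcard : Fintype.card {y // y ≠ y0} = q - 1 := by
    rw [Fintype.card_subtype_compl]
    simp [h2]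
  let e := (Fintype.equivFinOfCardEq hcard).symm
  refine ⟨fun i => (g (e i), (e i).1.1), fun i => ?_, fun i j hij => ⟨fun h => ?_, fun h => ?_⟩⟩
  · have := hft (e i).1
    rw [hg (e i)] at this
    simp only [t, Finset.some_mem_insertNone, N, Finset.mem_filter] at this
    exact ⟨this.1, (e i).1.2, this.2⟩
  · apply hij
    apply e.injective
    apply Subtype.ext
    apply hf
    rw [hg, hg]
    exact congrArg some h
  · exact hij (e.injective (Subtype.ext (Subtype.ext h)))
end

section
/- Let q ≥ 1 be an integer, let T be a tournament, and let S₁ and S₂ be disjoint sets of vertices of T with |S₁| = q + 1 and |S₂| = q. If the number of arcs from S₁ to S₂ is at least q², then there is a q-matching from S₁ to S₂. -/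
open Set

theorem stmt5 {V : Type*} [Fintype V] (T : V → V → Prop) (hT : IsTournament T)
    (q : ℕ) (hq : 1 ≤ q) (S₁ S₂ : Set V) (hdisj : Disjoint S₁ S₂)
    (h1 : S₁.ncard = q + 1) (h2 : S₂.ncard = q)
    (harcs : q ^ 2 ≤ arcs T S₁ S₂) :
    HasMatching T S₁ S₂ q := by
  classical
  have hinj : ∃ f : S₂ → V, Function.Injective f ∧
      ∀ y : S₂, f y ∈ Finset.univ.filter (fun x => x ∈ S₁ ∧ T x y) := by
    refine (Finset.all_card_le_biUnion_card_iff_exists_injective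
      (fun y : S₂ => Finset.univ.filter (fun x => x ∈ S₁ ∧ T x y))).1 ?_
    intro A
    by_contra hlt
    push Not at hlt
    set N := A.biUnion (fun y : S₂ => Finset.univ.filter (fun x => x ∈ S₁ ∧ T x y)) with hN
    set A' : Finset V := A.map (Function.Embedding.subtype _) with hA'
    have hcA : A'.card = A.card := Finset.card_map _
    have hsub : A' ⊆ S₂.toFinset := by
      intro x hx
      simp only [hA', Finset.mem_map] at hx
      obtain ⟨y, _, rfl⟩ := hx
      simp
    have h1' : S₁.toFinset.card = q + 1 := by rw [← h1, Set.ncard_eq_toFinset_card']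
    have h2' : S₂.toFinset.card = q := by rw [← h2, Set.ncard_eq_toFinset_card']
    have hle := Finset.card_le_card hsub
    have hsd := Finset.card_sdiff_add_card_eq_card hsub
    have hb : arcs T S₁ S₂ ≤ (N ×ˢ A' ∪ S₁.toFinset ×ˢ (S₂.toFinset \ A')).card := by
      unfold arcs
      rw [← Set.ncard_coe_finset]
      refine Set.ncard_le_ncard ?_ (Finset.finite_toSet _)
      rintro ⟨x, y⟩ ⟨hx, hy, hxy⟩
      simp only at hx hy hxy
      by_cases hyA : (⟨y, hy⟩ : S₂) ∈ A
      · have : y ∈ A' := Finset.mem_map.2 ⟨⟨y, hy⟩, hyA, rfl⟩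
        have hxN : x ∈ N := Finset.mem_biUnion.2 ⟨⟨y, hy⟩, hyA, by simp [hx, hxy]⟩
        simp [this, hxN]
      · have : y ∉ A' := by
          intro h
          obtain ⟨z, hz, hzy⟩ := Finset.mem_map.1 h
          apply hyA
          have : z = ⟨y, hy⟩ := Subtype.ext hzy
          rwa [← this]
        simp [this, hx, hy]
    have hb2 := hb.trans (Finset.card_union_le _ _)
    rw [Finset.card_product, Finset.card_product, h1', hcA] at hb2
    rw [h2', hcA] at hsd
    generalize (S₂.toFinset \ A').card = d at *
    generalize A.card = a at *
    generalize N.card = n at *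
    obtain ⟨b, rfl⟩ : ∃ b, a = b + 1 := ⟨a - 1, by omega⟩
    have hnb : n ≤ b := by omega
    have h3 : n * (b + 1) ≤ b * (b + 1) := Nat.mul_le_mul_right _ hnb
    subst hsd
    nlinarith [Nat.zero_le (b * d)]
  obtain ⟨f, hf, hfm⟩ := hinj
  have hcard : Fintype.card S₂ = q := by rw [← h2, ← Nat.card_coe_set_eq, Nat.card_eq_fintype_card]
  let g := (Fintype.equivFinOfCardEq hcard).symm
  refine ⟨fun i => (f (g i), g i), fun i => ?_, fun i j hij => ⟨?_, ?_⟩⟩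
  · have := hfm (g i)
    simp only [Finset.mem_filter, Finset.mem_univ, true_and] at this
    exact ⟨this.1, (g i).2, this.2⟩
  · exact fun h => hij (g.injective (hf h))
  · exact fun h => hij (g.injective (Subtype.ext h))
end

section
/- Let T be a tournament and let C be a directed cycle in T of length m ≥ 4. Then there exists a directed cycle C′ of length m − 1 with V(C′) ⊆ V(C) such that the unique remaining vertex u ∈ V(C) ∖ V(C′) satisfies d⁺(u, C) ≤ m − 3, where d⁺(u, C) is the number of out-neighbours of u among the vertices of C. -/
open Set

theorem zmod_closed {m : ℕ} [NeZero m] (P : ZMod m → Prop) (i : ZMod m) (hi : P i)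
    (h : ∀ i, P i → P (i + 1)) (j : ZMod m) : P j := by
  have key : ∀ n : ℕ, P (i + n) := by
    intro n
    induction n with
    | zero => simpa using hi
    | succ n ih =>
      have := h _ ih
      rwa [add_assoc, ← Nat.cast_succ] at this
  have := key (j - i).val
  simpa using this

theorem mk_cycle {V : Type*} (T : V → V → Prop) (n : ℕ) (f : ℕ → V)
    (hinj : ∀ i j, i < n + 1 → j < n + 1 → f i = f j → i = j)
    (harc : ∀ i, i < n → T (f i) (f (i + 1))) (hlast : T (f n) (f 0)) :
    IsCycle T (n + 1) (fun i : ZMod (n + 1) => f i.val) := by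
  refine ⟨?_, ?_⟩
  · intro i j hij
    exact ZMod.val_injective _ (hinj _ _ (ZMod.val_lt i) (ZMod.val_lt j) hij)
  · intro i
    have hlt := ZMod.val_lt i
    by_cases h : i.val = n
    · have h1 : i + 1 = 0 := by
        have : i = (n : ZMod (n + 1)) := (ZMod.natCast_zmod_val i).symm.trans (congrArg Nat.cast h)
        rw [this]; exact_mod_cast ZMod.natCast_self (n + 1)
      simp only [h1, h, ZMod.val_zero]
      exact hlast
    · have h1 : (i + 1).val = i.val + 1 := by
        have : i + 1 = ((i.val + 1 : ℕ) : ZMod (n + 1)) := by simp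
        rw [this, ZMod.val_natCast, Nat.mod_eq_of_lt (by omega)]
      simp only [h1]
      exact harc _ (by omega)

theorem natCast_inj_lt {k : ℕ} {i j : ℕ} (hi : i < k) (hj : j < k)
    (h : (i : ZMod k) = (j : ZMod k)) : i = j := by
  rw [ZMod.natCast_eq_natCast_iff'] at h
  rwa [Nat.mod_eq_of_lt hi, Nat.mod_eq_of_lt hj] at h

/-- Deleting a vertex along a shortcut. -/
theorem delete_cycle {V : Type*} (T : V → V → Prop) (n : ℕ) 
    (c : ZMod (n + 2) → V) (hc : IsCycle T (n + 2) c) (i : ZMod (n + 2))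
    (h : T (c i) (c (i + 2))) :
    ∃ c' : ZMod (n + 1) → V, IsCycle T (n + 1) c' ∧ Set.range c' ⊆ Set.range c ∧
      ∀ u ∈ Set.range c \ Set.range c', u = c (i + 1) := by
  refine ⟨_, mk_cycle T n (fun j => c (i + 2 + j)) ?_ ?_ ?_, ?_, ?_⟩
  · intro a b ha hb hab
    have := add_left_cancel (hc.1 hab)
    exact natCast_inj_lt (by omega) (by omega) this
  · intro a _
    have := hc.2 (i + 2 + a)
    simpa [add_assoc] using this
  · have : i + 2 + (n : ZMod (n + 2)) = i := by
      have h2 := ZMod.natCast_self (n + 2)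
      push_cast at h2
      rw [add_assoc, add_comm 2, h2, add_zero]
    simpa [this] using h
  · rintro _ ⟨a, rfl⟩
    exact ⟨_, rfl⟩
  · rintro u ⟨⟨a, rfl⟩, hu⟩
    by_contra hne
    apply hu
    have hlt := ZMod.val_lt (a - (i + 2))
    have hv : ((a - (i + 2)).val : ZMod (n + 2)) = a - (i + 2) := by simp
    have hx : (a - (i + 2)).val ≠ n + 1 := by
      intro hx
      rw [hx] at hv
      apply hne
      have h2 := ZMod.natCast_self (n + 2)
      push_cast at h2 hv
      congr 1
      linear_combination h2 - hv
    refine ⟨(((a - (i + 2)).val : ℕ) : ZMod (n + 1)), ?_⟩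
    simp only
    rw [ZMod.val_natCast, Nat.mod_eq_of_lt (by omega), hv]
    congr 1; ring

/-- Inserting a vertex. -/
theorem insert_cycle {V : Type*} (T : V → V → Prop) (n : ℕ)
    (s : ZMod (n + 1) → V) (hs : IsCycle T (n + 1) s) (w : V) (hw : w ∉ Set.range s)
    (i : ZMod (n + 1)) (h1 : T (s i) w) (h2 : T w (s (i + 1))) :
    ∃ c' : ZMod (n + 2) → V, IsCycle T (n + 2) c' ∧ 
      Set.range c' ⊆ insert w (Set.range s) := by
  have hn : i + 1 + (n : ZMod (n + 1)) = i := by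
    have h2 := ZMod.natCast_self (n + 1)
    push_cast at h2
    linear_combination h2
  refine ⟨_, mk_cycle T (n + 1) (fun j => if j < n + 1 then s (i + 1 + j) else w) ?_ ?_ ?_, ?_⟩
  · intro a b ha hb hab
    split_ifs at hab with p q q
    · exact natCast_inj_lt p q (add_left_cancel (hs.1 hab))
    · exact absurd ⟨_, hab⟩ hw
    · exact absurd ⟨_, hab.symm⟩ hw
    · omega
  · intro a ha
    simp only [ha, if_true]
    by_cases p : a + 1 < n + 1
    · have := hs.2 (i + 1 + a)
      simpa [p, add_assoc] using this
    · have : a = n := by omega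
      subst this
      simpa [hn] using h1
  · simpa using h2
  · rintro _ ⟨a, rfl⟩
    simp only
    split_ifs
    · exact Or.inr ⟨_, rfl⟩
    · exact Or.inl rfl

/-- Replacing a vertex by two. -/
theorem replace_cycle {V : Type*} (T : V → V → Prop) (n : ℕ)
    (s : ZMod (n + 2) → V) (hs : IsCycle T (n + 2) s) (b a : V) (hb : b ∉ Set.range s)
    (ha : a ∉ Set.range s) (hab : b ≠ a) (hba : T b a)
    (h1 : ∀ i, T (s i) b) (h2 : ∀ i, T a (s i)) :
    ∃ c' : ZMod (n + 3) → V, IsCycle T (n + 3) c' ∧ 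
      Set.range c' ⊆ insert a (insert b (Set.range s)) := by
  refine ⟨_, mk_cycle T (n + 2) (fun j => if j < n + 1 then s j else 
    if j = n + 1 then b else a) ?_ ?_ ?_, ?_⟩
  · intro x y hx hy hxy
    split_ifs at hxy
    all_goals first
      | omega
      | exact natCast_inj_lt (by omega) (by omega) (hs.1 hxy)
      | exact (hb ⟨_, hxy⟩).elim
      | exact (hb ⟨_, hxy.symm⟩).elim
      | exact (ha ⟨_, hxy⟩).elim
      | exact (ha ⟨_, hxy.symm⟩).elim
      | exact absurd hxy hab
      | exact absurd hxy.symm hab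
  · intro x hx
    rcases lt_trichotomy x n with p | p | p
    · have := hs.2 x
      simpa [p, show x < n + 1 by omega] using this
    · subst p
      simpa using h1 _
    · have : x = n + 1 := by omega
      subst this
      simpa using hba
  · simpa using h2 _
  · rintro _ ⟨x, rfl⟩
    simp only
    split_ifs
    · exact Or.inr (Or.inr ⟨_, rfl⟩)
    · exact Or.inr (Or.inl rfl)
    · exact Or.inl rfl

/-- Moon's extension step. -/
theorem extend_cycle {V : Type*} (T : V → V → Prop) (hT : IsTournament T)
    (m : ℕ) (c : ZMod m → V) (hc : IsCycle T m c) (n : ℕ) (hn : n + 2 < m)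
    (s : ZMod (n + 2) → V) (hs : IsCycle T (n + 2) s) (hsub : Set.range s ⊆ Set.range c) :
    ∃ c' : ZMod (n + 3) → V, IsCycle T (n + 3) c' ∧ Set.range c' ⊆ Set.range c := by
  have : NeZero m := ⟨by omega⟩
  by_contra hno
  have hdich : ∀ j, c j ∉ Set.range s → (∀ i, T (s i) (c j)) ∨ (∀ i, T (c j) (s i)) := by
    intro j hj
    by_contra hcon
    push Not at hcon
    obtain ⟨⟨i1, hi1⟩, ⟨i2, hi2⟩⟩ := hcon
    have hne : ∀ i, s i ≠ c j := fun i h => hj ⟨i, h⟩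
    have hi2' : T (s i2) (c j) := (hT.2 _ _ (hne i2)).2 hi2
    have hall := zmod_closed (fun i => T (s i) (c j)) i2 hi2' (by
      intro i hi
      by_contra h
      have h' : T (c j) (s (i + 1)) := (hT.2 _ _ (hne _).symm).2 h
      obtain ⟨c', hc', hr⟩ := insert_cycle T (n + 1) s hs (c j) hj i hi h'
      exact hno ⟨c', hc', hr.trans (Set.insert_subset ⟨j, rfl⟩ hsub)⟩)
    exact hi1 (hall i1)
  have asym : ∀ x y, T x y → ¬ T y x := by
    intro x y h
    by_cases hxy : x = y
    · subst hxy; exact hT.1 x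
    · exact (hT.2 x y hxy).1 h
  have hB : ∀ j, c j ∉ Set.range s → ∀ i, T (c j) (s i) := by
    intro j hj
    refine (hdich j hj).resolve_left ?_
    intro hjB
    have hall := zmod_closed (fun j => c j ∉ Set.range s ∧ ∀ i, T (s i) (c j)) j ⟨hj, hjB⟩ (by
      rintro j ⟨hj, hjB⟩
      have harc := hc.2 j
      have hout : c (j + 1) ∉ Set.range s := by
        rintro ⟨i, hi⟩
        rw [← hi] at harc
        exact asym _ _ harc (hjB i)
      refine ⟨hout, (hdich _ hout).resolve_right ?_⟩
      intro hA
      obtain ⟨c', hc', hr⟩ := replace_cycle T n s hs (c j) (c (j + 1)) hj hout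
        (fun h => hT.1 (c j) (by rw [← h] at harc; exact harc)) harc hjB hA
      exact hno ⟨c', hc', hr.trans 
        (Set.insert_subset ⟨_, rfl⟩ (Set.insert_subset ⟨_, rfl⟩ hsub))⟩)
    obtain ⟨l, hl⟩ := hsub ⟨0, rfl⟩
    exact (hall l).1 ⟨0, hl.symm⟩
  obtain ⟨l, hl⟩ := hsub ⟨0, rfl⟩
  have hall := zmod_closed (fun j => c j ∈ Set.range s) l ⟨0, hl.symm⟩ (by
    rintro j ⟨i, hi⟩
    by_contra hout
    have h1 := hB _ hout i
    rw [hi] at h1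
    exact asym _ _ h1 (hc.2 j))
  have hsub2 : Set.range c ⊆ Set.range s := by
    rintro _ ⟨j, rfl⟩; exact hall j
  have h3 := Set.ncard_le_ncard hsub2 (Set.finite_range s)
  have hcc : (Set.range c).ncard = m := by
    rw [Set.ncard_range_of_injective hc.1]; simp
  have hss : (Set.range s).ncard = n + 2 := by
    rw [Set.ncard_range_of_injective hs.1]; simp
  omega

theorem outDegTo_le {V : Type*} (T : V → V → Prop) (hT : IsTournament T)
    (m : ℕ) (hm : 4 ≤ m) (c : ZMod m → V) (hc : IsCycle T m c) (k i j : ZMod m) (hij : i ≠ j)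
    (h1 : T (c i) (c k)) (h2 : T (c j) (c k)) :
    outDegTo T (c k) (Set.range c) ≤ m - 3 := by
  have : NeZero m := ⟨by omega⟩
  have hik : i ≠ k := by rintro rfl; exact hT.1 _ h1
  have hjk : j ≠ k := by rintro rfl; exact hT.1 _ h2
  have hi := (hT.2 _ _ (hc.1.ne hik)).1 h1
  have hj := (hT.2 _ _ (hc.1.ne hjk)).1 h2
  have hsub : {w ∈ Set.range c | T (c k) w} ⊆ c '' (({i, j, k} : Finset (ZMod m))ᶜ : Finset (ZMod m)) := by
    rintro _ ⟨⟨l, rfl⟩, hl⟩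
    refine ⟨l, ?_, rfl⟩
    simp only [Finset.coe_compl, Set.mem_compl_iff, Finset.mem_coe, Finset.mem_insert,
      Finset.mem_singleton]
    rintro (rfl | rfl | rfl)
    · exact hi hl
    · exact hj hl
    · exact hT.1 _ hl
  have := Set.ncard_le_ncard hsub (Set.toFinite _)
  rw [Set.ncard_image_of_injective _ hc.1, Set.ncard_coe_finset, Finset.card_compl, ZMod.card,
    Finset.card_eq_three.2 ⟨i, j, k, hij, hik, hjk, rfl⟩] at this
  exact this

theorem stmt8 {V : Type*} (T : V → V → Prop) (hT : IsTournament T)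
    (m : ℕ) (hm : 4 ≤ m) (c : ZMod m → V) (hc : IsCycle T m c) :
    ∃ c' : ZMod (m - 1) → V, IsCycle T (m - 1) c' ∧
      Set.range c' ⊆ Set.range c ∧
      ∀ u ∈ Set.range c \ Set.range c', outDegTo T u (Set.range c) ≤ m - 3 := by
  have hdeg := outDegTo_le T hT m hm c hc
  have hdel : ∀ k i j l : ZMod m, i ≠ j → T (c i) (c (k + 1)) → T (c j) (c (k + 1)) → l = k + 2 →
      T (c k) (c l) → ∃ c' : ZMod (m - 1) → V, IsCycle T (m - 1) c' ∧
      Set.range c' ⊆ Set.range c ∧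
      ∀ u ∈ Set.range c \ Set.range c', outDegTo T u (Set.range c) ≤ m - 3 := by
    rintro k i j l hij h1 h2 rfl h3
    obtain ⟨n, rfl⟩ : ∃ n, m = n + 2 := ⟨m - 2, by omega⟩
    obtain ⟨c', hc', hr, hu⟩ := delete_cycle T n c hc k h3
    refine ⟨c', hc', hr, fun u hu' => ?_⟩
    rw [hu u hu']
    exact hdeg _ _ _ hij h1 h2
  have hnz : ∀ t : ℕ, 0 < t → t < 4 → (t : ZMod m) ≠ 0 := by
    intro t h0 h4 h
    rw [ZMod.natCast_eq_zero_iff] at h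
    have := Nat.le_of_dvd h0 h
    omega
  have e1 : (1 : ZMod m) ≠ 0 := by exact_mod_cast hnz 1 (by omega) (by omega)
  have e2 : (2 : ZMod m) ≠ 0 := by exact_mod_cast hnz 2 (by omega) (by omega)
  have e3 : (3 : ZMod m) ≠ 0 := by exact_mod_cast hnz 3 (by omega) (by omega)
  have hpos : ∀ k, (¬ ∃ i j, i ≠ j ∧ T (c i) (c k) ∧ T (c j) (c k)) →
      ∀ j, j ≠ k → j + 1 ≠ k → T (c k) (c j) := by
    intro k hk j hjk hjk'
    refine (hT.2 _ _ (hc.1.ne hjk.symm)).2 fun h => hk ⟨j, k - 1, ?_, h, ?_⟩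
    · rintro rfl; simp at hjk'
    · simpa using hc.2 (k - 1)
  by_cases hall : ∀ k, ∃ i j, i ≠ j ∧ T (c i) (c k) ∧ T (c j) (c k)
  · by_cases hsc : ∃ k, T (c k) (c (k + 2))
    · obtain ⟨k, hk⟩ := hsc
      obtain ⟨i, j, hij, h1, h2⟩ := hall (k + 1)
      exact hdel k i j _ hij h1 h2 rfl hk
    · push Not at hsc
      have h20 : T (c 2) (c 0) := by
        refine (hT.2 _ _ (hc.1.ne e2)).2 ?_
        simpa using hsc 0
      have key : ∀ n : ℕ, n + 3 < m → ∃ s : ZMod (n + 3) → V, IsCycle T (n + 3) s ∧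
          Set.range s ⊆ Set.range c := by
        intro n
        induction n with
        | zero =>
          intro _
          refine ⟨_, mk_cycle T 2 (fun j => c j) ?_ ?_ ?_, ?_⟩
          · intro i j hi hj h
            exact natCast_inj_lt (by omega) (by omega) (hc.1 h)
          · intro i _
            simpa using hc.2 i
          · simpa using h20
          · rintro _ ⟨a, rfl⟩
            exact ⟨_, rfl⟩
        | succ n ih =>
          intro hn
          obtain ⟨s, hs, hr⟩ := ih (by omega)
          exact extend_cycle T hT m c hc (n + 1) (by omega) s hs hr
      obtain ⟨n, rfl⟩ : ∃ n, m = n + 4 := ⟨m - 4, by omega⟩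
      obtain ⟨s, hs, hr⟩ := key n (by omega)
      refine ⟨s, hs, hr, ?_⟩
      rintro _ ⟨⟨k, rfl⟩, -⟩
      obtain ⟨i, j, hij, h1, h2⟩ := hall k
      exact hdeg _ _ _ hij h1 h2
  · push Not at hall
    obtain ⟨k, hk⟩ := hall
    have hk' := hpos k (by push Not; exact hk)
    have hk2 : T (c k) (c (k + 2)) := hk' _ (by simpa using e2) (by
      intro h; apply e3; linear_combination h)
    by_cases h1 : ∃ i j, i ≠ j ∧ T (c i) (c (k + 1)) ∧ T (c j) (c (k + 1))
    · obtain ⟨i, j, hij, h1, h2⟩ := h1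
      exact hdel k i j _ hij h1 h2 rfl hk2
    · have h3 : T (c (k + 1)) (c (k + 3)) := hpos _ h1 _ (by
        intro h; apply e2; linear_combination h) (by
        intro h; apply e3; linear_combination h)
      have e : k + 1 + 1 = k + 2 := by ring
      refine hdel (k + 1) k (k + 1) (k + 3) (by simpa using e1) ?_ (hc.2 _) (by ring) h3
      rw [e]; exact hk2
end

section
/- Let T be a tournament and let C be a directed cycle in T of length m ≥ 7. Then there exists a directed cycle C′ of length m − 1 with V(C′) ⊆ V(C) such that the unique remaining vertex u ∈ V(C) ∖ V(C′) satisfies d⁺(u, C) ≤ m − 4, where d⁺(u, C) is the number of out-neighbours of u among the vertices of C. -/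
open Set

open Classical in
/-- cut form of strong connectivity of the digraph induced on `S`. -/
def Strong9 {V : Type*} (T : V → V → Prop) (S : Finset V) : Prop :=
  ∀ A ⊆ S, A.Nonempty → A ≠ S → ∃ a ∈ A, ∃ b ∈ S, b ∉ A ∧ T a b

section
open Classical

variable {V : Type*} {T : V → V → Prop}

theorem avg9 (hT : IsTournament T) (S : Finset V) (k : ℕ) (hS : S.Nonempty) (hk : 2 * k ≤ S.card) :
    ∃ z ∈ S, k ≤ (S.filter (fun x => T x z)).card := by
  by_contra! h
  have h1 : ∀ z ∈ S, (S.filter (fun x => T x z)).card + (S.filter (fun x => T z x)).card + 1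
      = S.card := by
    intro z hz
    have e : S = insert z (S.filter (fun x => T x z) ∪ S.filter (fun x => T z x)) := by
      ext x
      have := hT.2 x z
      simp only [Finset.mem_insert, Finset.mem_union, Finset.mem_filter]
      by_cases hx : x = z
      · subst hx; simp [hz]
      · have := this hx
        tauto
    conv_rhs => rw [e]
    rw [Finset.card_insert_of_notMem, Finset.card_union_of_disjoint]
    · rw [Finset.disjoint_left]
      intro x hx hx'
      simp only [Finset.mem_filter] at hx hx'
      have hne : x ≠ z := by rintro rfl; exact hT.1 _ hx.2
      exact (hT.2 x z hne).1 hx.2 hx'.2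
    · simp [hT.1 z]
  have h2 : ∑ z ∈ S, (S.filter (fun x => T x z)).card = ∑ z ∈ S, (S.filter (fun x => T z x)).card := by
    simp only [Finset.card_filter]
    exact Finset.sum_comm
  have h3 := Finset.sum_congr rfl h1
  rw [Finset.sum_add_distrib, Finset.sum_add_distrib, ← h2] at h3
  simp only [Finset.sum_const, smul_eq_mul, mul_one] at h3
  have h4 : ∑ z ∈ S, ((S.filter (fun x => T x z)).card + 1) ≤ ∑ z ∈ S, k :=
    Finset.sum_le_sum (fun z hz => h z hz)
  rw [Finset.sum_add_distrib] at h4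
  simp only [Finset.sum_const, smul_eq_mul, mul_one] at h4
  have := hS.card_pos
  nlinarith

theorem ext9 {S : Finset V} {y a b : V} (hS : Strong9 T S) (ha : a ∈ S) (hb : b ∈ S)
    (hay : T a y) (hyb : T y b) : Strong9 T (insert y S) := by
  by_cases hyS : y ∈ S
  · rwa [Finset.insert_eq_of_mem hyS]
  intro A hA hne hA'
  by_cases h0 : S ⊆ A
  · have hy : y ∉ A := fun hy => hA' (Finset.Subset.antisymm hA (Finset.insert_subset hy h0))
    exact ⟨a, h0 ha, y, Finset.mem_insert_self _ _, hy, hay⟩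
  by_cases h1 : (A ∩ S).Nonempty
  · obtain ⟨p, hp, q, hq, hpq, t⟩ := hS (A ∩ S) Finset.inter_subset_right h1
      (fun e => h0 (by rw [← e]; exact Finset.inter_subset_left))
    refine ⟨p, (Finset.mem_inter.1 hp).1, q, Finset.mem_insert_of_mem hq, ?_, t⟩
    intro h; exact hpq (Finset.mem_inter.2 ⟨h, hq⟩)
  · rw [Finset.not_nonempty_iff_eq_empty] at h1
    obtain ⟨p, hp⟩ := hne
    have hbA : b ∉ A := fun h => by
      have : b ∈ A ∩ S := Finset.mem_inter.2 ⟨h, hb⟩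
      simp [h1] at this
    have : p = y := by
      rcases Finset.mem_insert.1 (hA hp) with h | h
      · exact h
      · have : p ∈ A ∩ S := Finset.mem_inter.2 ⟨hp, h⟩
        simp [h1] at this
    subst this
    exact ⟨p, hp, b, Finset.mem_insert_of_mem hb, hbA, hyb⟩

theorem grow9 {M : Finset V} (hM : Strong9 T M) : ∀ (n : ℕ) (S : Finset V), S ⊆ M → S.Nonempty →
    (M \ S).card = n + 1 → Strong9 T S → (∀ y ∈ M, y ∉ S → ∃ a ∈ S, T a y) →
    ∃ y ∈ M, y ∉ S ∧ Strong9 T (M.erase y) := by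
  intro n
  induction n with
  | zero =>
    intro S hSM _ hc hS _
    obtain ⟨y, hy⟩ := Finset.card_eq_one.1 hc
    have hyy : y ∈ M \ S := by rw [hy]; simp
    rw [Finset.mem_sdiff] at hyy
    refine ⟨y, hyy.1, hyy.2, ?_⟩
    have : M.erase y = S := by
      ext x
      have h1 : x ∈ M \ S ↔ x = y := by rw [hy]; simp
      rw [Finset.mem_sdiff] at h1
      rw [Finset.mem_erase]
      constructor
      · rintro ⟨h, h'⟩
        by_contra h2
        exact h (h1.1 ⟨h', h2⟩)
      · intro h
        exact ⟨fun e => hyy.2 (e ▸ h), hSM h⟩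
    rwa [this]
  | succ n ih =>
    intro S hSM hne hc hS hdom
    obtain ⟨y, hy, b, hb, hb', t⟩ := hM (M \ S) Finset.sdiff_subset
      (Finset.card_pos.1 (by omega)) (by
        intro e
        obtain ⟨s, hs⟩ := hne
        have := hSM hs
        rw [← e] at this
        exact (Finset.mem_sdiff.1 this).2 hs)
    rw [Finset.mem_sdiff] at hy
    have hbS : b ∈ S := by
      by_contra h
      exact hb' (Finset.mem_sdiff.2 ⟨hb, h⟩)
    obtain ⟨a, ha, hay⟩ := hdom y hy.1 hy.2
    obtain ⟨z, hz, hz', hz''⟩ := ih (insert y S) (Finset.insert_subset hy.1 hSM) (Finset.insert_nonempty _ _)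
      (by
        have : M \ insert y S = (M \ S).erase y := by
          ext x; simp; tauto
        rw [this, Finset.card_erase_of_mem (Finset.mem_sdiff.2 hy), hc]; rfl)
      (ext9 hS ha hbS hay t) (by
        intro w hw hw'
        obtain ⟨a, ha, h⟩ := hdom w hw (fun h => hw' (Finset.mem_insert_of_mem h))
        exact ⟨a, Finset.mem_insert_of_mem ha, h⟩)
    exact ⟨z, hz, fun h => hz' (Finset.mem_insert_of_mem h), hz''⟩

theorem base9 {M X Y W : Finset V} {v : V} (hM : Strong9 T M)
    (hMe : ∀ z, z ∈ M ↔ z = v ∨ z ∈ X ∨ z ∈ Y)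
    (hvX : v ∉ X) (hd : ∀ z ∈ X, z ∉ Y) (hX : X.Nonempty)
    (hvY : v ∉ Y)
    (hXY : ∀ x ∈ X, ∀ y ∈ Y, T x y) (hno : ∀ x ∈ X, ∀ y ∈ Y, ¬ T y x)
    (hWY : W ⊆ Y) (hW : ∀ w ∈ W, T w v) (hWn : W.Nonempty) : Strong9 T (insert v (X ∪ W)) := by
  intro A hA hne hA'
  by_contra! h
  have hmem : ∀ z, z ∈ insert v (X ∪ W) ↔ z = v ∨ z ∈ X ∨ z ∈ W := by simp
  obtain ⟨w, hw⟩ := hWn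
  have hvA : v ∈ A := by
    by_contra hv
    have hAW : ∀ w ∈ W, w ∉ A := fun w hw hwA => h w hwA v ((hmem v).2 (Or.inl rfl)) hv (hW w hw)
    obtain ⟨a, ha⟩ := hne
    rcases (hmem a).1 (hA ha) with e | e | e
    · exact hv (e ▸ ha)
    · exact h a ha w ((hmem w).2 (Or.inr (Or.inr hw))) (hAW w hw) (hXY a e w (hWY hw))
    · exact hAW a e ha
  have hXA : X ⊆ A := by
    intro x hx
    by_contra hxA
    obtain ⟨p, hp, q, hq, hq', t⟩ := hM (M \ (X \ A)) Finset.sdiff_subset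
      ⟨v, by simp [hvX, hMe]⟩ (by
        intro e
        have : x ∈ M := (hMe x).2 (Or.inr (Or.inl hx))
        rw [← e] at this
        simp [hx, hxA] at this)
    have hq2 : q ∈ X ∧ q ∉ A := by
      simp only [Finset.mem_sdiff] at hq'
      tauto
    have hp2 : p ∈ A ∨ p ∈ Y := by
      simp only [Finset.mem_sdiff, hMe] at hp
      rcases hp with ⟨h1 | h1 | h1, h2⟩
      · left; exact h1 ▸ hvA
      · tauto
      · tauto
    rcases hp2 with hp2 | hp2
    · exact h p hp2 q ((hmem q).2 (Or.inr (Or.inl hq2.1))) hq2.2 t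
    · exact hno q hq2.1 p hp2 t
  apply hA'
  apply Finset.Subset.antisymm hA
  intro z hz
  by_contra hzA
  rcases (hmem z).1 hz with e | e | e
  · exact hzA (e ▸ hvA)
  · exact hzA (hXA e)
  · obtain ⟨x, hx⟩ := hX
    exact h x (hXA hx) z hz hzA (hXY x hx z (hWY e))

theorem step9 (hT : IsTournament T) {M : Finset V} {v : V} (hM : Strong9 T M) (hm : 7 ≤ M.card)
    (hv : v ∈ M) (hcrit : ¬ Strong9 T (M.erase v)) :
    (∃ u ∈ M, 3 ≤ (M.filter (fun x => T x u)).card ∧ Strong9 T (M.erase u)) ∨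
    (∃ y ∈ M, T y v ∧ ∀ z ∈ M, T y z → z = v) := by
  unfold Strong9 at hcrit
  push Not at hcrit
  obtain ⟨Y, hYM, hYn, hYne, hno'⟩ := hcrit
  obtain ⟨X, hXdef⟩ : ∃ X, X = (M.erase v) \ Y := ⟨_, rfl⟩
  have hYM' : ∀ y ∈ Y, y ≠ v ∧ y ∈ M := fun y hy => Finset.mem_erase.1 (hYM hy)
  have hXm : ∀ x, x ∈ X ↔ (x ≠ v ∧ x ∈ M) ∧ x ∉ Y := by
    intro x; rw [hXdef]; simp
  have hXn : X.Nonempty := by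
    rw [hXdef, Finset.sdiff_nonempty]
    intro h; exact hYne (Finset.Subset.antisymm hYM h)
  have hno : ∀ x ∈ X, ∀ y ∈ Y, ¬ T y x := by
    intro x hx y hy
    have := (hXm x).1 hx
    exact hno' y hy x (Finset.mem_erase.2 this.1) this.2
  have hXY : ∀ x ∈ X, ∀ y ∈ Y, T x y := by
    intro x hx y hy
    rw [hT.2 x y (by rintro rfl; exact ((hXm _).1 hx).2 hy)]
    exact hno x hx y hy
  have hMe : ∀ z, z ∈ M ↔ z = v ∨ z ∈ X ∨ z ∈ Y := by
    intro z
    rw [hXm]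
    have := hYM' z
    by_cases h : z = v
    · subst h; simp [hv]
    · tauto
  have hvX : v ∉ X := fun h => ((hXm v).1 h).1.1 rfl
  have hvY : v ∉ Y := fun h => (hYM' v h).1 rfl
  have hd : ∀ z ∈ X, z ∉ Y := fun z hz => ((hXm z).1 hz).2
  have hcard : M.card = X.card + Y.card + 1 := by
    have : M = insert v (X ∪ Y) := by ext z; simp [hMe]
    rw [this, Finset.card_insert_of_notMem (by simp [hvX, hvY]),
      Finset.card_union_of_disjoint (Finset.disjoint_left.2 hd)]
  have hXp := hXn.card_pos
  have hYp := hYn.card_pos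
  have base : ∀ W ⊆ Y, (∀ w ∈ W, T w v) → W.Nonempty → Strong9 T (insert v (X ∪ W)) :=
    fun W h1 h2 h3 => base9 hM hMe hvX hd hXn hvY hXY hno h1 h2 h3
  have key : ∀ u B, B ⊆ M → (∀ b ∈ B, T b u) → 3 ≤ B.card →
      3 ≤ (M.filter (fun x => T x u)).card := by
    intro u B hB hB' hc
    refine hc.trans (Finset.card_le_card ?_)
    intro b hb
    exact Finset.mem_filter.2 ⟨hB hb, hB' b hb⟩
  have hXsub : X ⊆ M := fun x hx => (hMe x).2 (Or.inr (Or.inl hx))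
  have hYsub : Y ⊆ M := fun x hx => (hMe x).2 (Or.inr (Or.inr hx))
  by_cases hL : ∀ y ∈ Y, T y v
  · by_cases hY1 : Y.card = 1
    · right
      obtain ⟨y, hy⟩ := Finset.card_eq_one.1 hY1
      have hyY : y ∈ Y := by simp [hy]
      refine ⟨y, hYsub hyY, hL y hyY, ?_⟩
      intro z hz t
      rcases (hMe z).1 hz with h | h | h
      · exact h
      · exact absurd t (hno z h y hyY)
      · rw [hy, Finset.mem_singleton] at h
        subst h
        exact absurd t (hT.1 _)
    · left
      have hdel : ∀ z ∈ Y, Strong9 T (M.erase z) := by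
        intro z hz
        have e : M.erase z = insert v (X ∪ Y.erase z) := by
          ext w
          simp only [Finset.mem_erase, hMe, Finset.mem_insert, Finset.mem_union]
          have h1 : z ≠ v := (hYM' z hz).1
          have h2 : z ∉ X := fun h => hd z h hz
          constructor
          · tauto
          · rintro (rfl | h | h)
            · exact ⟨h1.symm, Or.inl rfl⟩
            · exact ⟨fun e => h2 (e ▸ h), by tauto⟩
            · tauto
        rw [e]
        apply base _ (Finset.erase_subset _ _) (fun w hw => hL w (Finset.mem_of_mem_erase hw))
        apply Finset.card_pos.1
        rw [Finset.card_erase_of_mem hz]; omega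
      by_cases hX3 : 3 ≤ X.card
      · obtain ⟨z, hz⟩ := hYn
        exact ⟨z, hYsub hz, key z X hXsub (fun b hb => hXY b hb z hz) hX3, hdel z hz⟩
      · obtain ⟨z, hz, hz2⟩ := avg9 hT Y 2 hYn (by omega)
        refine ⟨z, hYsub hz, key z (X ∪ Y.filter (fun x => T x z))
          (Finset.union_subset hXsub ((Finset.filter_subset _ _).trans hYsub)) ?_ ?_, hdel z hz⟩
        · intro b hb
          rcases Finset.mem_union.1 hb with h | h
          · exact hXY b h z hz
          · exact (Finset.mem_filter.1 h).2
        · rw [Finset.card_union_of_disjoint]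
          · omega
          · exact Finset.disjoint_left.2 (fun a ha h => hd a ha (Finset.mem_filter.1 h).1)
  · left
    push Not at hL
    obtain ⟨y0, hy0, hy0v⟩ := hL
    obtain ⟨L, hLdef⟩ : ∃ L, L = Y.filter (fun y => T y v) := ⟨_, rfl⟩
    have hLm : ∀ y, y ∈ L ↔ y ∈ Y ∧ T y v := by intro y; rw [hLdef]; simp
    have hLY : L ⊆ Y := fun y hy => ((hLm y).1 hy).1
    have hLn : L.Nonempty := by
      obtain ⟨a, ha, b, hb, hb', t⟩ := hM Y hYsub hYn (by rintro rfl; exact hvY hv)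
      refine ⟨a, (hLm a).2 ⟨ha, ?_⟩⟩
      rcases (hMe b).1 hb with h | h | h
      · exact h ▸ t
      · exact absurd t (hno b h a ha)
      · exact absurd h hb'
    have hSL := base L hLY (fun w hw => ((hLm w).1 hw).2) hLn
    obtain ⟨x, hx⟩ := hXn
    have grow : ∀ S, insert v (X ∪ L) ⊆ S → S ⊆ M → S ≠ M → Strong9 T S →
        ∃ y ∈ Y, y ∉ S ∧ T v y ∧ Strong9 T (M.erase y) := by
      intro S h1 h2 h3 h4
      have hpos : 0 < (M \ S).card := by
        rw [Finset.card_pos, Finset.sdiff_nonempty]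
        intro h; exact h3 (Finset.Subset.antisymm h2 h)
      have hin : ∀ y ∈ M, y ∉ S → y ∈ Y ∧ T v y := by
        intro y hy hyS
        have h5 : y ∉ insert v (X ∪ L) := fun h => hyS (h1 h)
        simp only [Finset.mem_insert, Finset.mem_union, hLm] at h5
        have h6 := (hMe y).1 hy
        have h7 : y ∈ Y := by tauto
        refine ⟨h7, ?_⟩
        rw [hT.2 v y (fun e => (hYM' y h7).1 e.symm)]
        tauto
      obtain ⟨y, hy, hy', hs⟩ := grow9 hM ((M \ S).card - 1) S h2
        ⟨v, h1 (Finset.mem_insert_self _ _)⟩ (by omega) h4 (by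
          intro y hy hyS
          exact ⟨x, h1 (by simp [hx]), hXY x hx y (hin y hy hyS).1⟩)
      exact ⟨y, (hin y hy hy').1, hy', (hin y hy hy').2, hs⟩
    have hS0M : insert v (X ∪ L) ⊆ M :=
      Finset.insert_subset hv (Finset.union_subset hXsub (hLY.trans hYsub))
    obtain ⟨y, hy, hyS, hvy, hys⟩ := grow _ (Finset.Subset.refl _) hS0M (by
      intro e
      have h1 := hYsub hy0
      rw [← e] at h1
      simp only [Finset.mem_insert, Finset.mem_union, hLm] at h1
      have h2 := (hYM' y0 hy0).1
      have h3 := fun h => hd y0 h hy0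
      tauto) hSL
    have hxv : x ≠ v := fun e => hvX (e ▸ hx)
    have hyv := (hYM' y hy).1
    have hxy : x ≠ y := fun e => hd x hx (e ▸ hy)
    by_cases hX2 : 2 ≤ X.card
    · refine ⟨y, hYsub hy, key y (insert v X) (Finset.insert_subset hv hXsub) ?_ ?_, hys⟩
      · intro b hb
        rcases Finset.mem_insert.1 hb with h | h
        · exact h ▸ hvy
        · exact hXY b h y hy
      · rw [Finset.card_insert_of_notMem hvX]; omega
    by_cases hw : ∃ w ∈ Y, T w y
    · obtain ⟨w, hw, t⟩ := hw
      have hxw : x ≠ w := fun e => hd x hx (e ▸ hw)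
      have hvw : v ≠ w := fun e => hvY (e ▸ hw)
      refine ⟨y, hYsub hy, key y {v, x, w} ?_ ?_ ?_, hys⟩
      · intro b; simp only [Finset.mem_insert, Finset.mem_singleton]
        rintro (rfl | rfl | rfl)
        · exact hv
        · exact hXsub hx
        · exact hYsub hw
      · intro b; simp only [Finset.mem_insert, Finset.mem_singleton]
        rintro (rfl | rfl | rfl)
        · exact hvy
        · exact hXY _ hx _ hy
        · exact t
      · rw [Finset.card_eq_three.2 ⟨v, x, w, hxv.symm, hvw, hxw, rfl⟩]
    · push Not at hw
      have hyW : ∀ w ∈ Y, w ≠ y → T y w := by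
        intro w hwY hne
        rw [hT.2 y w hne.symm]
        exact hw w hwY
      have hyL : y ∉ L := fun h => hyS (by simp [h])
      by_cases hLW : ∀ w ∈ Y, w ≠ y → w ∈ L
      · have hc : (Y.erase y).card = Y.card - 1 := Finset.card_erase_of_mem hy
        obtain ⟨z, hz, hz2⟩ := avg9 hT (Y.erase y) 1 (Finset.card_pos.1 (by omega)) (by omega)
        obtain ⟨w, hw2⟩ := Finset.card_pos.1 hz2
        simp only [Finset.mem_filter, Finset.mem_erase] at hw2 hz
        obtain ⟨⟨hwy, hwY⟩, hwz⟩ := hw2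
        obtain ⟨hzy, hzY⟩ := hz
        have hwz' : w ≠ z := by rintro rfl; exact hT.1 _ hwz
        have hxw : x ≠ w := fun e => hd x hx (e ▸ hwY)
        refine ⟨z, hYsub hzY, key z {y, x, w} ?_ ?_ ?_, ?_⟩
        · intro b; simp only [Finset.mem_insert, Finset.mem_singleton]
          rintro (rfl | rfl | rfl)
          · exact hYsub hy
          · exact hXsub hx
          · exact hYsub hwY
        · intro b; simp only [Finset.mem_insert, Finset.mem_singleton]
          rintro (rfl | rfl | rfl)
          · exact hyW z hzY hzy
          · exact hXY _ hx _ hzY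
          · exact hwz
        · rw [Finset.card_eq_three.2 ⟨y, x, w, hxy.symm, hwy.symm, hxw, rfl⟩]
        · have hb := base (L.erase z) ((Finset.erase_subset _ _).trans hLY)
            (fun w hw => ((hLm w).1 (Finset.mem_of_mem_erase hw)).2)
            ⟨w, Finset.mem_erase.2 ⟨hwz', hLW w hwY hwy⟩⟩
          have hb2 := ext9 (y := y) (a := x) (b := w) hb (by simp [hx])
            (by simp [hwz', hLW w hwY hwy]) (hXY x hx y hy) (hyW w hwY hwy)
          convert hb2 using 1
          ext p
          simp only [Finset.mem_erase, hMe, Finset.mem_insert, Finset.mem_union]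
          have h1 : z ≠ v := (hYM' z hzY).1
          have h2 : z ∉ X := fun h => hd z h hzY
          have h3 := hLW p
          have h4 := @hLY p
          by_cases h5 : p = z
          · subst h5; simp [hzy, h1, h2]
          · by_cases h6 : p = y
            · subst h6; simp [hy, h5]
            · tauto
      · push Not at hLW
        obtain ⟨w0, hw0Y, hw0y, hw0L⟩ := hLW
        obtain ⟨l, hl⟩ := hLn
        have hly : l ≠ y := fun e => hyL (e ▸ hl)
        have hb2 := ext9 (y := y) (a := x) (b := l) hSL (by simp [hx])
            (by simp [hl]) (hXY x hx y hy) (hyW l (hLY hl) hly)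
        obtain ⟨z, hz, hzS, hvz, hzs⟩ := grow _ (Finset.subset_insert y _)
          (Finset.insert_subset (hYsub hy) hS0M) (by
            intro e
            have h1 := hYsub hw0Y
            rw [← e] at h1
            simp only [Finset.mem_insert, Finset.mem_union] at h1
            have h2 := (hYM' w0 hw0Y).1
            have h3 := fun h => hd w0 h hw0Y
            tauto) hb2
        have hzy : z ≠ y := by rintro rfl; simp at hzS
        refine ⟨z, hYsub hz, key z {v, x, y} ?_ ?_ ?_, hzs⟩
        · intro b; simp only [Finset.mem_insert, Finset.mem_singleton]
          rintro (rfl | rfl | rfl)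
          · exact hv
          · exact hXsub hx
          · exact hYsub hy
        · intro b; simp only [Finset.mem_insert, Finset.mem_singleton]
          rintro (rfl | rfl | rfl)
          · exact hvz
          · exact hXY _ hx _ hz
          · exact hyW z hz hzy
        · rw [Finset.card_eq_three.2 ⟨v, x, y, hxv.symm, hyv.symm, hxy, rfl⟩]

theorem main9 (hT : IsTournament T) {M : Finset V} (hM : Strong9 T M) (hm : 7 ≤ M.card) :
    ∃ u ∈ M, 3 ≤ (M.filter (fun x => T x u)).card ∧ Strong9 T (M.erase u) := by
  by_contra hcon
  have step : ∀ v ∈ M, ¬ Strong9 T (M.erase v) →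
      ∃ y ∈ M, T y v ∧ (∀ z ∈ M, T y z → z = v) ∧ ¬ Strong9 T (M.erase y) := by
    intro v hv hcr
    rcases step9 hT hM hm hv hcr with h | ⟨y, hy, hyv, hz⟩
    · exact absurd h hcon
    · refine ⟨y, hy, hyv, hz, fun hs => hcon ⟨y, hy, ?_, hs⟩⟩
      have : (M.erase v).erase y ⊆ M.filter (fun x => T x y) := by
        intro b hb
        simp only [Finset.mem_erase] at hb
        rw [Finset.mem_filter, hT.2 b y hb.1]
        exact ⟨hb.2.2, fun t => hb.2.1 (hz b hb.2.2 t)⟩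
      have h1 := Finset.card_le_card this
      have h2 := Finset.pred_card_le_card_erase (s := M) (a := v)
      have h3 := Finset.pred_card_le_card_erase (s := M.erase v) (a := y)
      omega
  obtain ⟨v, hv, hv3⟩ := avg9 hT M 3 (Finset.card_pos.1 (by omega)) (by omega)
  have hcr : ¬ Strong9 T (M.erase v) := fun h => hcon ⟨v, hv, hv3, h⟩
  obtain ⟨y, hy, tyv, oy, cy⟩ := step v hv hcr
  obtain ⟨y', hy', ty', oy', cy'⟩ := step y hy cy
  obtain ⟨y'', hy'', ty'', oy'', -⟩ := step y' hy' cy'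
  have asymm : ∀ a b, T a b → ¬ T b a := by
    intro a b h
    exact (hT.2 a b (by rintro rfl; exact hT.1 _ h)).1 h
  have h1 : y'' ≠ y := by
    rintro rfl
    exact asymm _ _ ty'' ty'
  have h2 : T y y'' := by
    rw [hT.2 y y'' h1.symm]
    intro h
    have := oy'' y hy h
    subst this
    exact hT.1 _ ty'
  have h3 := oy _ hy'' h2
  subst h3
  obtain ⟨a, ha, b, hb, hb', t⟩ := hM {y'', y, y'} (by
    intro b; simp only [Finset.mem_insert, Finset.mem_singleton]
    rintro (rfl | rfl | rfl) <;> assumption) ⟨y, by simp⟩ (by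
    intro e
    have := Finset.card_le_three (a := y'') (b := y) (c := y')
    rw [e] at this
    omega)
  simp only [Finset.mem_insert, Finset.mem_singleton] at ha hb'
  rcases ha with rfl | rfl | rfl
  · exact hb' (by simp [oy'' b hb t])
  · exact hb' (by simp [oy b hb t])
  · exact hb' (by simp [oy' b hb t])

end

section
open Classical

variable {V : Type*} {T : V → V → Prop}

/-- reflexive closure of the arc relation -/
def Rel9 (T : V → V → Prop) (x y : V) : Prop := T x y ∨ x = y

theorem ins9 (hT : IsTournament T) (v : V) : ∀ (L : List V) (x : V), List.IsChain (Rel9 T) (x :: L) →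
    T x v → (∃ y ∈ L, T v y) → v ∉ L →
    ∃ L1 L2, L = L1 ++ L2 ∧ L2 ≠ [] ∧ List.IsChain (Rel9 T) (x :: (L1 ++ v :: L2)) := by
  intro L
  induction L with
  | nil => intro x _ _ h; simp at h
  | cons b L ih =>
    intro x hc hxv hy hv
    rw [List.isChain_cons_cons] at hc
    by_cases hb : T v b
    · refine ⟨[], b :: L, rfl, by simp, ?_⟩
      simp only [List.nil_append, List.isChain_cons_cons]
      exact ⟨Or.inl hxv, Or.inl hb, hc.2⟩
    · have hbv : T b v := by
        rw [hT.2 b v (by rintro rfl; simp at hv)]; exact hb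
      obtain ⟨L1, L2, h1, h2, h3⟩ := ih b hc.2 hbv (by
        obtain ⟨y, hy, t⟩ := hy
        rcases List.mem_cons.1 hy with h | h
        · exact absurd (h ▸ t) hb
        · exact ⟨y, h, t⟩) (fun h => hv (List.mem_cons_of_mem _ h))
      refine ⟨b :: L1, L2, by simp [h1], h2, ?_⟩
      rw [List.cons_append, List.isChain_cons_cons]
      exact ⟨hc.1, h3⟩

theorem longer9 (hT : IsTournament T) {S : Finset V} (hS : Strong9 T S) (l : List V) (hl0 : l ≠ [])
    (hnd : l.Nodup) (hlS : l.toFinset ⊆ S) (hne : l.toFinset ≠ S)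
    (hc : Cycle.Chain (Rel9 T) (l : Cycle V)) :
    ∃ l' : List V, l.length < l'.length ∧ l' ≠ [] ∧ l'.Nodup ∧ l'.toFinset ⊆ S ∧
      Cycle.Chain (Rel9 T) (l' : Cycle V) := by
  by_cases h1 : ∃ v ∈ S, v ∉ l ∧ (∃ x ∈ l, T x v) ∧ ∃ y ∈ l, T v y
  · obtain ⟨v, hvS, hvl, ⟨x, hx, txv⟩, y, hy, tvy⟩ := h1
    obtain ⟨p, q, rfl⟩ := List.append_of_mem hx
    have hrot : (p ++ x :: q) ~r (x :: (q ++ p)) := by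
      have := List.isRotated_append (l := p) (l' := x :: q)
      simpa using this
    have e : ((p ++ x :: q : List V) : Cycle V) = ((x :: (q ++ p) : List V) : Cycle V) :=
      Cycle.coe_eq_coe.2 hrot
    rw [e, Cycle.chain_coe_cons] at hc
    have hnd' : (x :: (q ++ p)).Nodup := hrot.nodup_iff.1 hnd
    have hm : ∀ z, z ∈ p ++ x :: q ↔ z ∈ x :: (q ++ p) := fun z => hrot.mem_iff
    obtain ⟨L1, L2, h2, h3, h4⟩ := ins9 hT v (q ++ p ++ [x]) x hc txv ⟨y, by
        have := (hm y).1 hy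
        simp only [List.mem_cons, List.mem_append, List.not_mem_nil] at this ⊢; tauto, tvy⟩ (by
        intro h
        apply hvl
        rw [hm]
        simp only [List.mem_cons, List.mem_append, List.not_mem_nil] at h ⊢; tauto)
    obtain ⟨L3, w, rfl⟩ := (List.eq_nil_or_concat L2).resolve_left h3
    rw [List.concat_eq_append] at h2 h4
    rw [← List.append_assoc] at h2
    obtain ⟨h5, h6⟩ := List.append_inj' h2 rfl
    simp only [List.cons.injEq, and_true] at h6
    subst h6
    have hperm : (x :: (L1 ++ v :: L3)).Perm (v :: x :: (q ++ p)) := by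
      rw [h5]
      exact (List.Perm.cons x List.perm_middle).trans (List.Perm.swap _ _ _)
    refine ⟨x :: (L1 ++ v :: L3), ?_, by simp, ?_, ?_, ?_⟩
    · rw [hperm.length_eq]; simp; omega
    · rw [hperm.nodup_iff, List.nodup_cons]
      exact ⟨fun h => hvl ((hm v).2 h), hnd'⟩
    · intro z hz
      rw [List.mem_toFinset, hperm.mem_iff, List.mem_cons] at hz
      rcases hz with h | h
      · exact h ▸ hvS
      · exact hlS (List.mem_toFinset.2 ((hm z).2 h))
    · rw [Cycle.chain_coe_cons]
      simpa using h4
  · push Not at h1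
    obtain ⟨a, ha, b, hb, hb', tab⟩ := hS l.toFinset hlS (by
      rwa [List.toFinset_nonempty_iff]) hne
    rw [List.mem_toFinset] at ha hb'
    obtain ⟨o, ho, i, hi, hi', toi⟩ := hS (S.filter (fun o => o ∉ l ∧ ∃ x ∈ l, T x o))
      (Finset.filter_subset _ _) ⟨b, by simp only [Finset.mem_filter]; exact ⟨hb, hb', a, ha, tab⟩⟩ (by
        intro e
        have h2 := hlS (List.mem_toFinset.2 ha)
        rw [← e] at h2
        exact (Finset.mem_filter.1 h2).2.1 ha)
    rw [Finset.mem_filter] at ho hi'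
    obtain ⟨hoS, hol, hox⟩ := ho
    have ho2 := h1 o hoS hol hox
    have hil : i ∉ l := fun h => ho2 i h toi
    have hio : ∀ x ∈ l, T i x := by
      intro x hx
      rw [hT.2 i x (fun e => hil (e ▸ hx))]
      intro t
      exact hi' ⟨hi, hil, x, hx, t⟩
    have hoi : o ≠ i := by rintro rfl; exact hT.1 _ toi
    cases l with
    | nil => exact absurd rfl hl0
    | cons h t =>
      rw [Cycle.chain_coe_cons] at hc
      have hho : T h o := by
        rw [hT.2 h o (by rintro rfl; simp at hol)]
        exact ho2 h (by simp)
      have hp : (h :: o :: i :: t).Perm (o :: i :: h :: t) :=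
        (List.Perm.swap _ _ _).trans (List.Perm.cons _ (List.Perm.swap _ _ _))
      refine ⟨h :: o :: i :: t, by simp, by simp, ?_, ?_, ?_⟩
      · rw [hp.nodup_iff, List.nodup_cons, List.nodup_cons]
        refine ⟨?_, hil, hnd⟩
        rw [List.mem_cons]
        rintro (h | h)
        · exact hoi h
        · exact hol h
      · intro z hz
        rw [List.mem_toFinset, hp.mem_iff, List.mem_cons, List.mem_cons] at hz
        rcases hz with h | h | h
        · exact h ▸ hoS
        · exact h ▸ hi
        · exact hlS (List.mem_toFinset.2 h)
      · rw [Cycle.chain_coe_cons]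
        simp only [List.cons_append, List.isChain_cons_cons]
        refine ⟨Or.inl hho, Or.inl toi, ?_⟩
        cases t with
        | nil =>
          simp only [List.nil_append, List.isChain_cons_cons, List.isChain_singleton, and_true]
          exact Or.inl (hio h (by simp))
        | cons b t =>
          simp only [List.cons_append, List.isChain_cons_cons] at hc ⊢
          exact ⟨Or.inl (hio b (by simp)), hc.2⟩

theorem camion9 (hT : IsTournament T) {S : Finset V} (hS : Strong9 T S) (hne : S.Nonempty) :
    ∃ l : List V, l.Nodup ∧ l.toFinset = S ∧ Cycle.Chain (Rel9 T) (l : Cycle V) := by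
  have main : ∀ (n : ℕ) (l : List V), S.card ≤ l.length + n → l ≠ [] → l.Nodup → l.toFinset ⊆ S →
      Cycle.Chain (Rel9 T) (l : Cycle V) →
      ∃ l : List V, l.Nodup ∧ l.toFinset = S ∧ Cycle.Chain (Rel9 T) (l : Cycle V) := by
    intro n
    induction n with
    | zero =>
      intro l h1 h2 h3 h4 h5
      refine ⟨l, h3, Finset.eq_of_subset_of_card_le h4 ?_, h5⟩
      rw [List.toFinset_card_of_nodup h3]; omega
    | succ n ih =>
      intro l h1 h2 h3 h4 h5
      by_cases he : l.toFinset = S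
      · exact ⟨l, h3, he, h5⟩
      · obtain ⟨l', g1, g2, g3, g4, g5⟩ := longer9 hT hS l h2 h3 h4 he h5
        exact ih l' (by omega) g2 g3 g4 g5
  obtain ⟨s, hs⟩ := hne
  refine main S.card [s] (by omega) (by simp) (by simp) (by simpa using hs) ?_
  rw [Cycle.chain_singleton]
  exact Or.inr rfl

theorem conv9 {l : List V} {n : ℕ} (hn : 2 ≤ n) (hl : l.length = n) (hnd : l.Nodup)
    (hc : Cycle.Chain (Rel9 T) (l : Cycle V)) :
    ∃ c : ZMod n → V, IsCycle T n c ∧ ∀ z, z ∈ Set.range c ↔ z ∈ l := by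
  haveI : NeZero n := ⟨by omega⟩
  have hlt : ∀ i : ZMod n, i.val < l.length := fun i => hl ▸ ZMod.val_lt i
  have hinj : Function.Injective (fun i : ZMod n => l[i.val]'(hlt i)) := by
    intro i j h
    exact ZMod.val_injective n ((hnd.getElem_inj_iff).1 h)
  refine ⟨fun i => l[i.val]'(hlt i), ⟨hinj, ?_⟩, ?_⟩
  · intro i
    have hne : i ≠ i + 1 := by
      intro h
      have h1 : (1 : ZMod n) = 0 := by simpa using h.symm
      have := congrArg ZMod.val h1
      rw [ZMod.val_zero, ZMod.val_one'' (by omega)] at this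
      omega
    have hr : Rel9 T (l[i.val]'(hlt i)) (l[(i+1).val]'(hlt (i+1))) := by
      cases l with
      | nil => simp at hl; omega
      | cons h t =>
        rw [Cycle.chain_coe_cons, List.isChain_iff_getElem] at hc
        have hv : (i + 1).val = (i.val + 1) % n := by
          rw [ZMod.val_add, ZMod.val_one'' (by omega)]
        have hi := hlt i
        have h1 := hc i.val (by simp at hi ⊢; omega)
        simp only [← List.cons_append] at h1
        rw [List.getElem_append_left hi] at h1
        by_cases hw : i.val + 1 = n
        · rw [List.getElem_append_right (by omega)] at h1
          have hz : (i + 1).val = 0 := by rw [hv, hw, Nat.mod_self]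
          simpa [hz] using h1
        · have hz : (i + 1).val = i.val + 1 := by
            rw [hv, Nat.mod_eq_of_lt (by omega)]
          rw [List.getElem_append_left (by omega)] at h1
          simpa only [hz] using h1
    rcases hr with h | h
    · exact h
    · exact absurd (hinj h) hne
  · intro z
    constructor
    · rintro ⟨i, rfl⟩
      exact List.getElem_mem _
    · intro hz
      obtain ⟨k, hk, rfl⟩ := List.getElem_of_mem hz
      refine ⟨(k : ZMod n), ?_⟩
      have : (k : ZMod n).val = k := ZMod.val_cast_of_lt (by omega)
      simp only [this]

end

theorem stmt9 {V : Type*} (T : V → V → Prop) (hT : IsTournament T)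
    (m : ℕ) (hm : 7 ≤ m) (c : ZMod m → V) (hc : IsCycle T m c) :
    ∃ c' : ZMod (m - 1) → V, IsCycle T (m - 1) c' ∧
      Set.range c' ⊆ Set.range c ∧
      ∀ u ∈ Set.range c \ Set.range c', outDegTo T u (Set.range c) ≤ m - 4 := by
  classical
  haveI : NeZero m := ⟨by omega⟩
  obtain ⟨M, hMdef⟩ : ∃ M, M = Finset.univ.image c := ⟨_, rfl⟩
  have hMm : ∀ z, z ∈ M ↔ z ∈ Set.range c := by intro z; rw [hMdef]; simp
  have hMc : M.card = m := by
    rw [hMdef, Finset.card_image_of_injective _ hc.1, Finset.card_univ, ZMod.card]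
  have hM : Strong9 T M := by
    intro A hA hne hA'
    by_contra! h
    obtain ⟨a, ha⟩ := hne
    obtain ⟨i, rfl⟩ := (hMm a).1 (hA ha)
    have hn : ∀ n : ℕ, c (i + n) ∈ A := by
      intro n
      induction n with
      | zero => simpa using ha
      | succ n ih =>
        by_contra hcon
        refine h _ ih (c (i + (n + 1 : ℕ))) ((hMm _).2 ⟨_, rfl⟩) hcon ?_
        have := hc.2 (i + n)
        rw [add_assoc] at this
        exact_mod_cast this
    apply hA'
    apply Finset.Subset.antisymm hA
    intro z hz
    obtain ⟨j, rfl⟩ := (hMm z).1 hz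
    have := hn (j - i).val
    rw [ZMod.natCast_zmod_val, add_sub_cancel] at this
    exact this
  obtain ⟨u, hu, hu3, hus⟩ := main9 hT hM (by omega)
  have hcu : (M.erase u).card = m - 1 := by rw [Finset.card_erase_of_mem hu, hMc]
  obtain ⟨l, hnd, hlS, hch⟩ := camion9 hT hus (Finset.card_pos.1 (by omega))
  obtain ⟨c', hc', hr⟩ := conv9 (n := m - 1) (by omega)
    (by rw [← hcu, ← hlS, List.toFinset_card_of_nodup hnd]) hnd hch
  have hr' : ∀ z, z ∈ Set.range c' ↔ z ≠ u ∧ z ∈ M := by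
    intro z
    rw [hr, ← List.mem_toFinset, hlS, Finset.mem_erase]
  refine ⟨c', hc', ?_, ?_⟩
  · intro z hz
    exact (hMm z).1 ((hr' z).1 hz).2
  · rintro w ⟨hw1, hw2⟩
    have hwu : w = u := by
      by_contra h
      exact hw2 ((hr' w).2 ⟨h, (hMm w).2 hw1⟩)
    subst hwu
    unfold outDegTo
    have e : {z ∈ Set.range c | T w z} = ((M.filter (fun z => T w z) : Finset V) : Set V) := by
      ext z
      simp [hMm]
    rw [e, Set.ncard_coe_finset]
    have hsub : M.filter (fun z => T w z) ⊆ (M \ M.filter (fun x => T x w)).erase w := by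
      intro z hz
      rw [Finset.mem_filter] at hz
      have hne : w ≠ z := by rintro rfl; exact hT.1 _ hz.2
      rw [Finset.mem_erase, Finset.mem_sdiff, Finset.mem_filter]
      exact ⟨hne.symm, hz.1, fun h => (hT.2 w z hne).1 hz.2 h.2⟩
    have h1 := Finset.card_le_card hsub
    rw [Finset.card_erase_of_mem (by
      rw [Finset.mem_sdiff, Finset.mem_filter]
      exact ⟨hu, fun h => hT.1 _ h.2⟩), Finset.card_sdiff_of_subset (Finset.filter_subset _ _)] at h1
    omega
end

section
/- Let T be a tournament and let C be a directed cycle in T of length m ≥ 7. Then there exists a directed cycle C″ of length m − 2 with V(C″) ⊆ V(C) such that, denoting the two remaining vertices by x and y with (x, y) an arc of T, the vertex y satisfies d⁺(y, C) ≤ m − 4, where d⁺(y, C) is the number of out-neighbours of y among the vertices of C. -/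
open Set

namespace Stmt10

/-- `S` is the vertex set of a directed cycle. -/
def HC {W : Type*} [DecidableEq W] (T : W → W → Prop) (S : Finset W) : Prop :=
  ∃ x t, List.IsChain T (x :: t) ∧ (x :: t).getLast? = some x ∧ t.Nodup ∧ t.toFinset = S

section
variable {W : Type*} [DecidableEq W] {T : W → W → Prop}

lemma path_insert (v : W) (t : List W) : ∀ (x z : W), (∀ w ∈ x :: t, T w v ∨ T v w) →
    ¬ (T x v ∧ T v x) →
    List.IsChain T (x :: t) → (x :: t).getLast? = some z → T x v → T v z → 
    (∀ w, ¬ (T w v ∧ T v w)) →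
    ∃ t', List.IsChain T (x :: t') ∧ (x :: t').getLast? = some z ∧ t'.Perm (v :: t) := by
  induction t with
  | nil =>
    intro x z _ h _ hl hx hz _
    simp at hl
    subst hl
    exact absurd ⟨hx, hz⟩ h
  | cons b t ih =>
    intro x z htot h hch hl hx hz has
    rw [List.isChain_cons_cons] at hch
    rw [List.getLast?_cons_cons] at hl
    rcases htot b (by simp) with hb | hb
    · obtain ⟨t', h1, h2, h3⟩ := ih b z (fun w hw => htot w (by simp at hw ⊢; tauto))
        (has b) hch.2 hl hb hz has
      refine ⟨b :: t', ?_, ?_, ?_⟩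
      · rw [List.isChain_cons_cons]; exact ⟨hch.1, h1⟩
      · rw [List.getLast?_cons_cons]; exact h2
      · exact (h3.cons b).trans (List.Perm.swap _ _ _)
    · refine ⟨v :: b :: t, ?_, ?_, List.Perm.refl _⟩
      · simp only [List.isChain_cons_cons]; exact ⟨hx, hb, hch.2⟩
      · simpa only [List.getLast?_cons_cons] using hl

lemma HC.rotate {S : Finset W} (h : HC T S) {u : W} (hu : u ∈ S) :
    ∃ t, List.IsChain T (u :: t) ∧ (u :: t).getLast? = some u ∧ t.Nodup ∧ t.toFinset = S := by
  obtain ⟨x, t, h1, h2, h3, rfl⟩ := h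
  rw [List.mem_toFinset] at hu
  obtain ⟨t1, t2, rfl⟩ := List.append_of_mem hu
  refine ⟨t2 ++ (t1 ++ [u]), ?_, ?_, ?_, ?_⟩
  · have e : x :: (t1 ++ u :: t2) = (x :: t1) ++ (u :: t2) := by simp
    have hl : (u :: t2).getLast? = some x := by
      rw [e, List.getLast?_append] at h2
      simpa using h2
    have hA : List.IsChain T (u :: t2) := by
      rw [e] at h1; exact h1.right_of_append
    have hB : List.IsChain T (x :: (t1 ++ [u])) := by
      have e' : x :: (t1 ++ u :: t2) = (x :: (t1 ++ [u])) ++ t2 := by simp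
      rw [e'] at h1; exact h1.left_of_append
    have : u :: (t2 ++ (t1 ++ [u])) = (u :: t2) ++ (t1 ++ [u]) := by simp
    rw [this, List.isChain_append]
    refine ⟨hA, hB.tail, ?_⟩
    intro a ha b hb
    rw [hl] at ha
    simp at ha
    subst ha
    rw [List.isChain_cons] at hB
    exact hB.1 b hb
  · rw [← List.cons_append, ← List.append_assoc, List.getLast?_append]; simp
  · refine (List.Perm.nodup_iff ?_).1 h3
    rw [← List.append_assoc]
    refine List.Perm.trans ?_ (List.perm_append_comm)
    simp only [List.cons_append, List.nil_append]
    exact List.perm_middle.trans ((List.perm_append_comm).cons u)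
  · ext a; simp; tauto

structure Tour (T : W → W → Prop) : Prop where
  asym : ∀ a b, T a b → ¬ T b a
  tot : ∀ a b, a ≠ b → T a b ∨ T b a

lemma Tour.ne (hT : Tour T) {a b : W} (h : T a b) : a ≠ b := by
  rintro rfl; exact hT.asym _ _ h h

lemma HC.insert (hT : Tour T) {S : Finset W} (h : HC T S) {v : W} (hv : v ∉ S)
    (h1 : ∃ a ∈ S, T a v) (h2 : ∃ b ∈ S, T v b) : HC T (insert v S) := by
  obtain ⟨b, hb, hvb⟩ := h2
  obtain ⟨a, ha, hav⟩ := h1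
  obtain ⟨t, g1, g2, g3, rfl⟩ := h.rotate ha
  have hva : v ≠ a := fun e => hv (e ▸ ha)
  -- first in path from a to b there is an insertion place
  rw [List.mem_toFinset] at hb hv
  obtain ⟨t1, t2, rfl⟩ := List.append_of_mem hb
  have e' : a :: (t1 ++ b :: t2) = (a :: (t1 ++ [b])) ++ t2 := by simp
  have hA : List.IsChain T (a :: (t1 ++ [b])) := by
    rw [e'] at g1; exact g1.left_of_append
  obtain ⟨t', k1, k2, k3⟩ := path_insert v (t1 ++ [b]) a b
    (by
      intro w hw
      apply hT.tot
      rintro rfl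
      simp only [List.mem_cons, List.mem_append, List.not_mem_nil] at hw hv
      tauto) (fun h => hT.asym _ _ h.1 h.2) hA
    (by rw [← List.cons_append, List.getLast?_append]; simp) hav hvb
    (fun w h => hT.asym _ _ h.1 h.2)
  have p : (t' ++ t2).Perm (v :: (t1 ++ b :: t2)) := by
    have := k3.append_right t2
    simpa using this
  refine ⟨a, t' ++ t2, ?_, ?_, ?_, ?_⟩
  · rw [← List.cons_append, List.isChain_append]
    rw [e', List.isChain_append] at g1
    refine ⟨k1, g1.2.1, ?_⟩
    intro x hx y hy
    refine g1.2.2 x ?_ y hy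
    rw [k2] at hx
    rw [← List.cons_append, List.getLast?_append]; simpa using hx
  · rw [← List.cons_append, List.getLast?_append, k2]
    rw [e', List.getLast?_append, ← List.cons_append, List.getLast?_append] at g2
    simpa using g2
  · rw [p.nodup_iff, List.nodup_cons]; exact ⟨hv, g3⟩
  · rw [List.toFinset_eq_of_perm _ _ p]; simp

lemma HC.triangle (hT : Tour T) {a b c : W} (h1 : T a b) (h2 : T b c) (h3 : T c a) :
    HC T {a, b, c} := by
  refine ⟨c, [a, b, c], ?_, ?_, ?_, ?_⟩
  · simp [h1, h2, h3]
  · simp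
  · have := hT.ne h1; have := hT.ne h2; have := hT.ne h3
    simp; grind
  · simp

lemma HC.insertMany (hT : Tour T) {A : Finset W} (h : HC T A) (B : Finset W)
    (hB : ∀ v ∈ B, v ∉ A → (∃ a ∈ A, T a v) ∧ (∃ b ∈ A, T v b)) : HC T (A ∪ B) := by
  induction B using Finset.induction_on with
  | empty => simpa using h
  | insert v B hv ih =>
    have ih := ih (fun w hw => hB w (by simp [hw]))
    rw [Finset.union_insert]
    by_cases hvA : v ∈ A ∪ B
    · rwa [Finset.insert_eq_of_mem hvA]
    · obtain ⟨⟨a, ha, h1⟩, b, hb, h2⟩ := hB v (by simp) (by simp at hvA; tauto)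
      exact ih.insert hT hvA ⟨a, by simp [ha], h1⟩ ⟨b, by simp [hb], h2⟩

lemma HC.toFun {S : Finset W} (h : HC T S) {n : ℕ} (hn : S.card = n) (h3 : 3 ≤ n) :
    ∃ f : ZMod n → W, IsCycle T n f ∧ Set.range f = ↑S := by
  obtain ⟨x, t, g1, g2, g3, rfl⟩ := h
  rw [List.toFinset_card_of_nodup g3] at hn
  subst hn
  haveI : NeZero t.length := ⟨by omega⟩
  refine ⟨fun i => t[i.val]'(ZMod.val_lt i), ⟨?_, ?_⟩, ?_⟩
  · intro i j hij
    have := (List.Nodup.getElem_inj_iff g3).1 hij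
    exact ZMod.val_injective _ this
  · intro i
    have hi := ZMod.val_lt i
    haveI : Fact (1 < t.length) := ⟨by omega⟩
    have hv : (i + 1).val = (i.val + 1) % t.length := by
      rw [ZMod.val_add, ZMod.val_one]
    rw [List.isChain_iff_getElem] at g1
    by_cases hlt : i.val + 1 < t.length
    · rw [Nat.mod_eq_of_lt hlt] at hv
      have := g1 (i.val + 1) (by simp; omega)
      simp only [List.getElem_cons_succ] at this
      simp only [hv]; exact this
    · have e : i.val + 1 = t.length := by omega
      rw [e, Nat.mod_self] at hv
      have := g1 0 (by simp; omega)
      simp only [List.getElem_cons_succ, List.getElem_cons_zero] at this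
      simp only [hv]
      have hx : t[i.val] = x := by
        rw [List.getLast?_eq_getElem?] at g2
        simp only [List.length_cons, Nat.add_sub_cancel] at g2
        rw [← e] at g2
        rw [List.getElem?_cons_succ] at g2
        rw [List.getElem?_eq_getElem hi] at g2
        simpa using g2
      rw [hx]; exact this
  · ext w
    simp only [Set.mem_range, List.coe_toFinset, Set.mem_setOf_eq]
    constructor
    · rintro ⟨i, rfl⟩; exact List.getElem_mem _
    · intro hw
      obtain ⟨k, hk, rfl⟩ := List.getElem_of_mem hw
      refine ⟨(k : ZMod t.length), ?_⟩
      simp only [ZMod.val_natCast, Nat.mod_eq_of_lt hk]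

end
section
variable {W : Type*} [DecidableEq W] [Fintype W] {T : W → W → Prop}

/-- every proper nonempty vertex set has an arc leaving it. -/
def Cut (T : W → W → Prop) : Prop :=
  ∀ A : Finset W, A.Nonempty → A ≠ Finset.univ → ∃ a ∈ A, ∃ b, b ∉ A ∧ T a b

/-- in-degree at least three, via witnesses. -/
def In3 (T : W → W → Prop) (y : W) : Prop :=
  ∃ a b c, a ≠ b ∧ a ≠ c ∧ b ≠ c ∧ T a y ∧ T b y ∧ T c y

def Good (T : W → W → Prop) : Prop :=
  ∃ x y, T x y ∧ HC T ({x, y}ᶜ) ∧ In3 T y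

lemma cut_in (hC : Cut T) (A : Finset W) (h1 : A.Nonempty) (h2 : A ≠ Finset.univ) :
    ∃ a, a ∉ A ∧ ∃ b ∈ A, T a b := by
  obtain ⟨a, ha, b, hb, h⟩ := hC Aᶜ (by
    rw [Finset.nonempty_iff_ne_empty]; simpa using h2) (by
    intro e
    rw [Finset.compl_eq_univ_iff] at e
    exact h1.ne_empty e)
  exact ⟨a, by simpa using ha, b, by simpa using hb, h⟩

lemma grow (hT : Tour T) (hC : Cut T) {A : Finset W} (hA : HC T A) {y : W} (hy : y ∈ A)
    (hd : ∀ v, v ∉ A → T y v) (n : ℕ) (h1 : A.card ≤ n) (h2 : n ≤ Fintype.card W) :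
    ∃ S, A ⊆ S ∧ HC T S ∧ S.card = n := by
  induction n, h1 using Nat.le_induction with
  | base => exact ⟨A, subset_rfl, hA, rfl⟩
  | succ n hn ih =>
    obtain ⟨S, hS, hH, hc⟩ := ih (by omega)
    obtain ⟨a, ha, b, hb, hab⟩ := cut_in hC S ⟨y, hS hy⟩ (by
      rintro rfl; rw [Finset.card_univ] at hc; omega)
    refine ⟨insert a S, hS.trans (Finset.subset_insert _ _), ?_, ?_⟩
    · exact hH.insert hT ha ⟨y, hS hy, hd a (fun h => ha (hS h))⟩ ⟨b, hb, hab⟩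
    · rw [Finset.card_insert_of_notMem ha, hc]

lemma compl_pair {S : Finset W} (h : S.card + 2 = Fintype.card W) :
    ∃ a b, a ≠ b ∧ a ∉ S ∧ b ∉ S ∧ S = {a, b}ᶜ := by
  have : (Sᶜ).card = 2 := by rw [Finset.card_compl]; omega
  obtain ⟨a, b, hab, e⟩ := Finset.card_eq_two.1 this
  refine ⟨a, b, hab, ?_, ?_, ?_⟩
  · rw [← Finset.mem_compl, e]; simp
  · rw [← Finset.mem_compl, e]; simp
  · rw [← e, compl_compl]

lemma good_of_pair (hT : Tour T) {a b : W} (hab : a ≠ b) (h : HC T ({a, b}ᶜ))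
    (h1 : T a b → In3 T b) (h2 : T b a → In3 T a) : Good T := by
  rcases hT.tot a b hab with g | g
  · exact ⟨a, b, g, h, h1 g⟩
  · exact ⟨b, a, g, by rwa [Finset.pair_comm], h2 g⟩

/-- Removing two vertices outside a big cycle. -/
lemma good_of_big (hT : Tour T) (hC : Cut T) {A : Finset W} (hA : HC T A) {y x : W}
    (hy : y ∈ A) (hx : x ∈ A) (hxy : x ≠ y)
    (hd : ∀ v, v ∉ A → T y v) (hd' : ∀ v, v ∉ A → T x v)
    (h : A.card + 2 ≤ Fintype.card W) : Good T := by
  obtain ⟨S, hS, hH, hc⟩ := grow hT hC hA hy hd (Fintype.card W - 2) (by omega) (by omega)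
  obtain ⟨a, b, hab, ha, hb, rfl⟩ := compl_pair (S := S) (by omega)
  have ha' : a ∉ A := fun h => ha (hS h)
  have hb' : b ∉ A := fun h => hb (hS h)
  refine good_of_pair hT hab hH (fun g => ⟨x, y, a, hxy, ?_, ?_, hd' b hb', hd b hb', g⟩)
    (fun g => ⟨x, y, b, hxy, ?_, ?_, hd' a ha', hd a ha', g⟩)
  · rintro rfl; exact ha' hx
  · rintro rfl; exact ha' hy
  · rintro rfl; exact hb' hx
  · rintro rfl; exact hb' hy

lemma HC.congr {A B : Finset W} (h : HC T A) (e : ∀ v, v ∈ A ↔ v ∈ B) : HC T B := by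
  have : A = B := Finset.ext e
  exact this ▸ h

lemma exists_not_mem (F : Finset W) (h : F.card < Fintype.card W) : ∃ v, v ∉ F := by
  by_contra hh
  push Not at hh
  have : F = Finset.univ := Finset.eq_univ_of_forall hh
  rw [this, Finset.card_univ] at h
  omega

/-- a cycle of every length (used when all in-degrees are at least 3). -/
lemma moon (hT : Tour T) (hC : Cut T) (n : ℕ) (h3 : 3 ≤ n) (hn : n ≤ Fintype.card W) :
    ∃ S, HC T S ∧ S.card = n := by
  induction n, h3 using Nat.le_induction with
  | base =>
    obtain ⟨y, -⟩ := exists_not_mem (∅ : Finset W) (by simp; omega)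
    obtain ⟨a, ha, b, hb, hab⟩ := hC {y} (by simp) (by
      intro e; have := congrArg Finset.card e; rw [Finset.card_univ] at this; simp at this; omega)
    simp at ha hb
    subst ha
    classical
    obtain ⟨o, ho, i, hi, hoi⟩ := hC (Finset.univ.filter (T a)) ⟨b, by simpa using hab⟩ (by
      intro e
      have : a ∈ Finset.univ.filter (T a) := by rw [e]; simp
      simp at this
      exact hT.ne this rfl)
    simp at ho hi
    have hia : T i a := by
      rcases hT.tot i a (by rintro rfl; exact hT.asym _ _ ho hoi) with h | h
      · exact h
      · exact absurd h hi
    refine ⟨_, HC.triangle hT ho hoi hia, ?_⟩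
    have := hT.ne ho; have := hT.ne hoi; have := hT.ne hia
    rw [Finset.card_eq_three]
    exact ⟨a, o, i, by grind, by grind, by grind, rfl⟩
  | succ n hn3 ih =>
    obtain ⟨S, hS, hc⟩ := ih (by omega)
    have hne : S.Nonempty := by rw [← Finset.card_pos]; omega
    have hnu : S ≠ Finset.univ := by rintro rfl; rw [Finset.card_univ] at hc; omega
    by_cases hex : ∃ v, v ∉ S ∧ (∃ a ∈ S, T a v) ∧ (∃ b ∈ S, T v b)
    · obtain ⟨v, hv, h1, h2⟩ := hex
      exact ⟨insert v S, hS.insert hT hv h1 h2, by rw [Finset.card_insert_of_notMem hv, hc]⟩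
    · push Not at hex
      classical
      -- O = vertices dominated by S
      obtain ⟨s0, hs0, o0, ho0, h0⟩ := hC S hne hnu
      obtain ⟨i0, hi0, s1, hs1, h1⟩ := cut_in hC S hne hnu
      obtain ⟨o, ho, i, hi, hoi⟩ := hC (Finset.univ.filter (fun v => v ∉ S ∧ ∃ a ∈ S, T a v))
        ⟨o0, by simp; exact ⟨ho0, s0, hs0, h0⟩⟩ (by
          intro e
          have : s0 ∈ Finset.univ.filter (fun v => v ∉ S ∧ ∃ a ∈ S, T a v) := by rw [e]; simp
          simp at this
          exact this.1 hs0)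
      simp only [Finset.mem_filter, Finset.mem_univ, true_and] at ho hi
      have hiS : i ∉ S := fun h => hex o ho.1 ho.2 i h hoi
      have hi' : ∀ a ∈ S, T i a := by
        intro a ha
        rcases hT.tot i a (by rintro rfl; exact hiS ha) with g | g
        · exact g
        · exact absurd ⟨hiS, a, ha, g⟩ hi
      have ho' : ∀ a ∈ S, T a o := by
        intro a ha
        rcases hT.tot a o (by rintro rfl; exact ho.1 ha) with g | g
        · exact g
        · exact absurd g (hex o ho.1 ho.2 a ha)
      obtain ⟨B, hB, hBc⟩ := Finset.exists_subset_card_eq (s := S) (n := n - 1) (by omega)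
      have hBne : B.Nonempty := by rw [← Finset.card_pos]; omega
      obtain ⟨s, hs⟩ := hBne
      have hoi' := hT.ne hoi
      refine ⟨insert o (insert i B), ?_, ?_⟩
      · refine ((HC.triangle hT (ho' s (hB hs)) hoi (hi' s (hB hs))).insertMany hT B ?_).congr ?_
        · intro v hv _
          exact ⟨⟨i, by simp, hi' v (hB hv)⟩, ⟨o, by simp, ho' v (hB hv)⟩⟩
        · intro v
          simp only [Finset.mem_union, Finset.mem_insert, Finset.mem_singleton]
          grind
      · rw [Finset.card_insert_of_notMem, Finset.card_insert_of_notMem, hBc]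
        · omega
        · exact fun h => hiS (hB h)
        · simp only [Finset.mem_insert, not_or]
          exact ⟨hoi', fun h => ho.1 (hB h)⟩

lemma caseC (hT : Tour T) (hC : Cut T) (hm : 7 ≤ Fintype.card W) (h : ∀ v, In3 T v) : Good T := by
  obtain ⟨S, hS, hc⟩ := moon hT hC (Fintype.card W - 2) (by omega) (by omega)
  obtain ⟨a, b, hab, -, -, rfl⟩ := compl_pair (S := S) (by omega)
  exact good_of_pair hT hab hS (fun _ => h b) (fun _ => h a)

lemma four_in (hT : Tour T) {L : Finset W} (h : 4 ≤ L.card) :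
    ∃ a ∈ L, ∃ b ∈ L, ∃ c ∈ L, a ≠ c ∧ T a b ∧ T c b := by
  obtain ⟨L', hL, hc⟩ := Finset.exists_subset_card_eq h
  obtain ⟨p, q, r, s, h1, h2, h3, h4, h5, h6, rfl⟩ := Finset.card_eq_four.1 hc
  have hp : p ∈ L := hL (by simp)
  have hq : q ∈ L := hL (by simp)
  have hr : r ∈ L := hL (by simp)
  have hs : s ∈ L := hL (by simp)
  by_contra hcon
  push Not at hcon
  have key : ∀ a ∈ L, ∀ b ∈ L, ∀ c ∈ L, a ≠ c → c ≠ b → T a b → T b c := by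
    intro a ha b hb c hc hac hcb hab
    exact (hT.tot c b hcb).resolve_left (hcon a ha b hb c hc hac hab)
  rcases hT.tot p q h1 with g | g
  · have g1 := key p hp q hq r hr h2 h4.symm g
    have g2 := key p hp q hq s hs h3 h5.symm g
    rcases hT.tot r s h6 with k | k
    · exact hcon _ hq _ hs _ hr h4 g2 k
    · exact hcon _ hq _ hr _ hs h5 g1 k
  · have g1 := key q hq p hp r hr h4 h2.symm g
    have g2 := key q hq p hp s hs h5 h3.symm g
    rcases hT.tot r s h6 with k | k
    · exact hcon _ hp _ hs _ hr h2 g2 k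
    · exact hcon _ hp _ hr _ hs h3 g1 k

lemma caseA (hT : Tour T) (hC : Cut T) (hm : 7 ≤ Fintype.card W) {x y : W} (hxy : T x y)
    (hy : ∀ v, T v y → v = x) : Good T := by
  classical
  have hne := hT.ne hxy
  have hd : ∀ v, v ≠ x → v ≠ y → T y v := fun v h1 h2 =>
    (hT.tot y v h2.symm).resolve_right (fun h => h1 (hy v h))
  let L := Finset.univ.filter (fun v => T v x)
  have mL : ∀ v, v ∈ L ↔ T v x := by simp [L]
  have hxL : x ∉ L := by rw [mL]; exact fun h => hT.ne h rfl
  have hyL : y ∉ L := by rw [mL]; exact hT.asym _ _ hxy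
  have nx : ∀ v ∈ L, v ≠ x := fun v hv e => hxL (e ▸ hv)
  have ny : ∀ v ∈ L, v ≠ y := fun v hv e => hyL (e ▸ hv)
  have hK : ∀ K ⊆ L, K.Nonempty → HC T (insert x (insert y K)) := by
    rintro K hK ⟨p, hp⟩
    refine ((HC.triangle hT hxy (hd p (nx p (hK hp)) (ny p (hK hp)))
      ((mL p).1 (hK hp))).insertMany hT K ?_).congr ?_
    · intro v hv _
      exact ⟨⟨y, by simp, hd v (nx v (hK hv)) (ny v (hK hv))⟩, ⟨x, by simp, (mL v).1 (hK hv)⟩⟩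
    · intro v
      simp only [Finset.mem_union, Finset.mem_insert, Finset.mem_singleton]
      grind
  have hLne : L.Nonempty := by
    obtain ⟨a, ha, b, hb, hab⟩ := cut_in hC {x} (by simp) (by
      intro e; have := congrArg Finset.card e; rw [Finset.card_univ] at this; simp at this; omega)
    simp at hb
    subst hb
    exact ⟨a, (mL a).2 hab⟩
  have hA := hK L subset_rfl hLne
  have hAc : (insert x (insert y L)).card = L.card + 2 := by
    rw [Finset.card_insert_of_notMem, Finset.card_insert_of_notMem hyL]
    simp [hne, hxL]
  by_cases hbig : (insert x (insert y L)).card + 2 ≤ Fintype.card W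
  · refine good_of_big hT hC hA (y := y) (x := x) (by simp) (by simp) hne ?_ ?_ hbig
    · intro v hv
      simp at hv
      exact hd v hv.1 hv.2.1
    · intro v hv
      simp at hv
      refine (hT.tot x v (Ne.symm hv.1)).resolve_right (fun h => hv.2.2 ((mL v).2 h))
  rw [hAc] at hbig
  by_cases hfull : ∃ s, s ∉ insert x (insert y L)
  · obtain ⟨s, hs⟩ := hfull
    have huniv : ∀ v, v = s ∨ v = x ∨ v = y ∨ v ∈ L := by
      intro v
      by_contra hv
      push Not at hv
      have := Finset.card_le_univ (insert v (insert s (insert x (insert y L))))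
      rw [Finset.card_insert_of_notMem, Finset.card_insert_of_notMem hs, hAc] at this
      · omega
      · simp; tauto
    have hLc : 3 ≤ L.card := by
      have := Finset.card_le_card (s := Finset.univ) (t := insert s (insert x (insert y L)))
        (fun v _ => by simp; exact huniv v)
      rw [Finset.card_insert_of_notMem hs, hAc, Finset.card_univ] at this
      omega
    simp only [Finset.mem_insert, not_or] at hs
    have hxs : T x s := (hT.tot x s (Ne.symm hs.1)).resolve_right (fun h => hs.2.2 ((mL s).2 h))
    have hys : T y s := hd s hs.1 hs.2.1
    by_cases hr : ∃ r ∈ L, T r s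
    · obtain ⟨r, hr, hrs⟩ := hr
      refine ⟨r, s, hrs, (hK (L.erase r) (Finset.erase_subset _ _) ?_).congr ?_,
        ⟨x, y, r, hne, (nx r hr).symm, (ny r hr).symm, hxs, hys, hrs⟩⟩
      · rw [← Finset.card_pos, Finset.card_erase_of_mem hr]; omega
      · intro v
        have := huniv v; have := nx r hr; have := ny r hr
        simp only [Finset.mem_insert, Finset.mem_erase, Finset.mem_compl, Finset.mem_singleton]
        grind
    · push Not at hr
      have hsL : ∀ r ∈ L, T s r := fun r h =>
        (hT.tot s r (by rintro rfl; exact hs.2.2 h)).resolve_right (hr r h)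
      obtain ⟨L', hL', hc'⟩ := Finset.exists_subset_card_eq hLc
      obtain ⟨a, b, p, hab, hap, hbp, rfl⟩ := Finset.card_eq_three.1 hc'
      have ha : a ∈ L := hL' (by simp)
      have hb : b ∈ L := hL' (by simp)
      have hp : p ∈ L := hL' (by simp)
      have hpK : p ∈ (L.erase a).erase b := by simp [hp, Ne.symm hap, Ne.symm hbp]
      have key := (hK ((L.erase a).erase b)
        ((Finset.erase_subset _ _).trans (Finset.erase_subset _ _)) ⟨p, hpK⟩).insert hT
        (v := s) (by simp [hs]) ⟨y, by simp, hys⟩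
        ⟨p, by rw [Finset.mem_insert, Finset.mem_insert]; exact Or.inr (Or.inr hpK), hsL p hp⟩
      refine good_of_pair hT hab (key.congr ?_)
        (fun g => ⟨y, s, a, Ne.symm hs.2.1, (ny a ha).symm, by rintro rfl; exact hs.2.2 ha,
          hd b (nx b hb) (ny b hb), hsL b hb, g⟩)
        (fun g => ⟨y, s, b, Ne.symm hs.2.1, (ny b hb).symm, by rintro rfl; exact hs.2.2 hb,
          hd a (nx a ha) (ny a ha), hsL a ha, g⟩)
      intro v
      have := huniv v; have := nx a ha; have := ny a ha; have := nx b hb; have := ny b hb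
      simp only [Finset.mem_insert, Finset.mem_erase, Finset.mem_compl, Finset.mem_singleton]
      grind
  · push Not at hfull
    have hLc : 5 ≤ L.card := by
      have := Finset.card_le_card (s := Finset.univ) (t := insert x (insert y L))
        (fun v _ => hfull v)
      rw [hAc, Finset.card_univ] at this
      omega
    obtain ⟨a, ha, b, hb, c, hc, hac, hab, hcb⟩ := four_in hT (L := L) (by omega)
    have hab' := hT.ne hab
    refine ⟨a, b, hab, (hK ((L.erase a).erase b)
        ((Finset.erase_subset _ _).trans (Finset.erase_subset _ _)) ⟨c, ?_⟩).congr ?_,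
        ⟨y, a, c, (ny a ha).symm, (ny c hc).symm, hac, hd b (nx b hb) (ny b hb), hab, hcb⟩⟩
    · simp [hc, Ne.symm hac, hT.ne hcb]
    · intro v
      have := hfull v; have := nx a ha; have := ny a ha; have := nx b hb; have := ny b hb
      simp only [Finset.mem_insert, Finset.mem_erase, Finset.mem_compl, Finset.mem_singleton] at *
      grind

lemma caseB (hT : Tour T) (hC : Cut T) (hm : 7 ≤ Fintype.card W) {x s y : W} (hxy : T x y)
    (hsy : T s y) (hxs : T x s) (hy : ∀ v, T v y → v = x ∨ v = s)
    (hx2 : ∃ p q, p ≠ q ∧ T p x ∧ T q x) : Good T := by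
  classical
  have hnxy := hT.ne hxy
  have hnsy := hT.ne hsy
  have hnxs := hT.ne hxs
  have hd : ∀ v, v ≠ x → v ≠ s → v ≠ y → T y v := fun v h1 h2 h3 =>
    (hT.tot y v h3.symm).resolve_right (fun h => (hy v h).elim h1 h2)
  let L := Finset.univ.filter (fun v => v ≠ x ∧ v ≠ s ∧ v ≠ y ∧ (T v x ∨ T v s))
  have mL : ∀ v, v ∈ L ↔ v ≠ x ∧ v ≠ s ∧ v ≠ y ∧ (T v x ∨ T v s) := by simp [L]
  have mx : ∀ v, T v x → v ∈ L := by
    intro v hv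
    rw [mL]
    refine ⟨hT.ne hv, ?_, ?_, Or.inl hv⟩
    · rintro rfl; exact hT.asym _ _ hv hxs
    · rintro rfl; exact hT.asym _ _ hv hxy
  have dL : ∀ v ∈ L, T y v := fun v hv => by
    obtain ⟨h1, h2, h3, -⟩ := (mL v).1 hv
    exact hd v h1 h2 h3
  have hK : ∀ K ⊆ L, (∃ p ∈ K, T p x) → HC T (insert x (insert s (insert y K))) := by
    rintro K hK ⟨p, hp, hpx⟩
    refine (((HC.triangle hT hxy (dL p (hK hp)) hpx).insert hT (v := s) ?_ ⟨x, by simp, hxs⟩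
      ⟨y, by simp, hsy⟩).insertMany hT K ?_).congr ?_
    · have := (mL p).1 (hK hp)
      simp only [Finset.mem_insert, Finset.mem_singleton]
      grind
    · intro v hv _
      refine ⟨⟨y, by simp, dL v (hK hv)⟩, ?_⟩
      rcases ((mL v).1 (hK hv)).2.2.2 with h | h
      · exact ⟨x, by simp, h⟩
      · exact ⟨s, by simp, h⟩
    · intro v
      simp only [Finset.mem_union, Finset.mem_insert, Finset.mem_singleton]
      grind
  obtain ⟨p0, q0, hpq0, hp0, hq0⟩ := hx2
  have hA := hK L subset_rfl ⟨p0, mx p0 hp0, hp0⟩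
  have hAc : (insert x (insert s (insert y L))).card = L.card + 3 := by
    rw [Finset.card_insert_of_notMem, Finset.card_insert_of_notMem, Finset.card_insert_of_notMem]
    · simp [mL]
    · simp [mL, hnsy]
    · simp [mL, hnxy, hnxs]
  by_cases hbig : (insert x (insert s (insert y L))).card + 2 ≤ Fintype.card W
  · refine good_of_big hT hC hA (y := y) (x := x) (by simp) (by simp) hnxy ?_ ?_ hbig
    · intro v hv
      simp at hv
      exact hd v hv.1 hv.2.1 hv.2.2.1
    · intro v hv
      simp at hv
      refine (hT.tot x v (Ne.symm hv.1)).resolve_right (fun h => hv.2.2.2 (mx v h))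
  rw [hAc] at hbig
  by_cases hfull : ∃ r, r ∉ insert x (insert s (insert y L))
  · obtain ⟨r, hr⟩ := hfull
    have huniv : ∀ v, v = r ∨ v = x ∨ v = s ∨ v = y ∨ v ∈ L := by
      intro v
      by_contra hv
      push Not at hv
      have := Finset.card_le_univ (insert v (insert r (insert x (insert s (insert y L)))))
      rw [Finset.card_insert_of_notMem, Finset.card_insert_of_notMem hr, hAc] at this
      · omega
      · simp; tauto
    have hLc : 3 ≤ L.card := by
      have := Finset.card_le_card (s := Finset.univ)
        (t := insert r (insert x (insert s (insert y L))))
        (fun v _ => by simp; exact huniv v)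
      rw [Finset.card_insert_of_notMem hr, hAc, Finset.card_univ] at this
      omega
    simp only [Finset.mem_insert, not_or] at hr
    obtain ⟨hrx, hrs, hry, hrL⟩ := hr
    have hxr : T x r := (hT.tot x r (Ne.symm hrx)).resolve_right (fun h => hrL (mx r h))
    have hsr : T s r := (hT.tot s r (Ne.symm hrs)).resolve_right
      (fun h => hrL ((mL r).2 ⟨hrx, hrs, hry, Or.inr h⟩))
    have hyr : T y r := hd r hrx hrs hry
    by_cases hex : ∃ w ∈ L, T w r
    · obtain ⟨w, hw, hwr⟩ := hex
      refine ⟨w, r, hwr, (hK (L.erase w) (Finset.erase_subset _ _) ?_).congr ?_,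
        ⟨x, s, y, hnxs, hnxy, hnsy, hxr, hsr, hyr⟩⟩
      · by_cases e : p0 = w
        · exact ⟨q0, by simp [mx q0 hq0]; rintro rfl; exact hpq0 e, hq0⟩
        · exact ⟨p0, by simp [mx p0 hp0, e], hp0⟩
      · intro v
        have := huniv v; have := (mL w).1 hw
        simp only [Finset.mem_insert, Finset.mem_erase, Finset.mem_compl, Finset.mem_singleton]
        grind
    · push Not at hex
      have hrL' : ∀ w ∈ L, T r w := fun w h =>
        (hT.tot r w (by rintro rfl; exact hrL h)).resolve_right (hex w h)
      obtain ⟨L', hL', hc'⟩ := Finset.exists_subset_card_eq (s := L.erase p0) (n := 2)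
        (by rw [Finset.card_erase_of_mem (mx p0 hp0)]; omega)
      obtain ⟨a, b, hab, rfl⟩ := Finset.card_eq_two.1 hc'
      have ha : a ∈ L.erase p0 := hL' (by simp)
      have hb : b ∈ L.erase p0 := hL' (by simp)
      rw [Finset.mem_erase] at ha hb
      have hpK : p0 ∈ (L.erase a).erase b := by
        simp [mx p0 hp0, Ne.symm ha.1, Ne.symm hb.1]
      have key := (hK ((L.erase a).erase b)
        ((Finset.erase_subset _ _).trans (Finset.erase_subset _ _)) ⟨p0, hpK, hp0⟩).insert hT
        (v := r) (by simp [hrx, hrs, hry, hrL]) ⟨y, by simp, hyr⟩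
        ⟨p0, by simp only [Finset.mem_insert]; exact Or.inr (Or.inr (Or.inr hpK)),
          hrL' p0 (mx p0 hp0)⟩
      have ha' := (mL a).1 ha.2
      have hb' := (mL b).1 hb.2
      refine good_of_pair hT hab (key.congr ?_)
        (fun g => ⟨y, r, a, Ne.symm hry, ha'.2.2.1.symm, by rintro rfl; exact hrL ha.2,
          dL b hb.2, hrL' b hb.2, g⟩)
        (fun g => ⟨y, r, b, Ne.symm hry, hb'.2.2.1.symm, by rintro rfl; exact hrL hb.2,
          dL a ha.2, hrL' a ha.2, g⟩)
      intro v
      have := huniv v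
      simp only [Finset.mem_insert, Finset.mem_erase, Finset.mem_compl, Finset.mem_singleton]
      grind
  · push Not at hfull
    have hLc : 4 ≤ L.card := by
      have := Finset.card_le_card (s := Finset.univ) (t := insert x (insert s (insert y L)))
        (fun v _ => hfull v)
      rw [hAc, Finset.card_univ] at this
      omega
    by_contra hcon
    -- no pair avoiding an in-neighbour of x works
    have key : ∀ p a b, T p x → a ∈ L → b ∈ L → a ≠ p → b ≠ p → T a b → ¬ In3 T b := by
      intro p a b hp ha hb hap hbp hab h3
      have ha' := (mL a).1 ha
      have hb' := (mL b).1 hb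
      refine hcon ⟨a, b, hab, (hK ((L.erase a).erase b)
        ((Finset.erase_subset _ _).trans (Finset.erase_subset _ _)) ⟨p, ?_, hp⟩).congr ?_, h3⟩
      · simp [mx p hp, Ne.symm hap, Ne.symm hbp]
      · intro v
        have := hfull v
        simp only [Finset.mem_insert, Finset.mem_erase, Finset.mem_compl,
          Finset.mem_singleton] at *
        grind
    have key2 : ∀ a ∈ L, ∀ b ∈ L, a ≠ p0 → b ≠ p0 → T a b → ∀ d, d ≠ a → d ≠ b → d ≠ y →
        T b d := by
      intro a ha b hb hap hbp hab d hda hdb hdy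
      refine (hT.tot b d (Ne.symm hdb)).resolve_right (fun h => ?_)
      exact key p0 a b hp0 ha hb hap hbp hab ⟨y, a, d, ((mL a).1 ha).2.2.1.symm, hdy.symm,
        hda.symm, dL b hb, hab, h⟩
    obtain ⟨L', hL', hc'⟩ := Finset.exists_subset_card_eq (s := L.erase p0) (n := 3)
      (by rw [Finset.card_erase_of_mem (mx p0 hp0)]; omega)
    obtain ⟨a, b, c, hab, hac, hbc, rfl⟩ := Finset.card_eq_three.1 hc'
    have ha : a ∈ L.erase p0 := hL' (by simp)
    have hb : b ∈ L.erase p0 := hL' (by simp)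
    have hc : c ∈ L.erase p0 := hL' (by simp)
    rw [Finset.mem_erase] at ha hb hc
    have main : ∀ a b c, a ∈ L → b ∈ L → c ∈ L → a ≠ p0 → b ≠ p0 → c ≠ p0 → a ≠ b → a ≠ c →
        b ≠ c → T a b → False := by
      intro a b c ha hb hc hap hbp hcp hab hac hbc g
      have ha' := (mL a).1 ha
      have hb' := (mL b).1 hb
      have hc' := (mL c).1 hc
      have hp' := (mL p0).1 (mx p0 hp0)
      have g1 : T b c := key2 a ha b hb hap hbp g c hac.symm hbc.symm hc'.2.2.1
      have g2 : T c a := key2 b hb c hc hbp hcp g1 a hab hac ha'.2.2.1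
      have g3 : T a x := key2 c hc a ha hcp hap g2 x hc'.1.symm ha'.1.symm hnxy
      have g4 : T b p0 := key2 a ha b hb hap hbp g p0 hap.symm hbp.symm hp'.2.2.1
      have g5 : T c p0 := key2 b hb c hc hbp hcp g1 p0 hbp.symm hcp.symm hp'.2.2.1
      exact key a c p0 g3 hc (mx p0 hp0) hac.symm hap.symm g5
        ⟨y, b, c, hb'.2.2.1.symm, hc'.2.2.1.symm, hbc, dL p0 (mx p0 hp0), g4, g5⟩
    rcases hT.tot a b hab with g | g
    · exact main a b c ha.2 hb.2 hc.2 ha.1 hb.1 hc.1 hab hac hbc g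
    · exact main b a c hb.2 ha.2 hc.2 hb.1 ha.1 hc.1 hab.symm hbc hac g

lemma good (hT : Tour T) (hC : Cut T) (hm : 7 ≤ Fintype.card W) : Good T := by
  by_cases h1 : ∃ x y, T x y ∧ ∀ v, T v y → v = x
  · obtain ⟨x, y, hxy, h⟩ := h1
    exact caseA hT hC hm hxy h
  push Not at h1
  have h2 : ∀ y, ∃ p q, p ≠ q ∧ T p y ∧ T q y := by
    intro y
    obtain ⟨a, ha, b, hb, hab⟩ := cut_in hC {y} (by simp) (by
      intro e; have := congrArg Finset.card e; rw [Finset.card_univ] at this; simp at this; omega)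
    simp at hb
    subst hb
    obtain ⟨v, hv, hva⟩ := h1 a b hab
    exact ⟨v, a, hva, hv, hab⟩
  by_cases h3 : ∀ y, In3 T y
  · exact caseC hT hC hm h3
  push Not at h3
  obtain ⟨y, hy⟩ := h3
  obtain ⟨p, q, hpq, hp, hq⟩ := h2 y
  have hN : ∀ v, T v y → v = p ∨ v = q := by
    intro v hv
    by_contra hcon
    push Not at hcon
    exact hy ⟨v, p, q, hcon.1, hcon.2, hpq, hv, hp, hq⟩
  rcases hT.tot p q hpq with g | g
  · exact caseB hT hC hm hp hq g hN (h2 p)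
  · exact caseB hT hC hm hq hp g (fun v hv => (hN v hv).symm) (h2 q)

end

end Stmt10

theorem stmt10 {V : Type*} (T : V → V → Prop) (hT : IsTournament T)
    (m : ℕ) (hm : 7 ≤ m) (c : ZMod m → V) (hc : IsCycle T m c) :
    ∃ c'' : ZMod (m - 2) → V, IsCycle T (m - 2) c'' ∧
      Set.range c'' ⊆ Set.range c ∧
      ∃ x y : V, Set.range c \ Set.range c'' = {x, y} ∧ T x y ∧
        outDegTo T y (Set.range c) ≤ m - 4 := by
  classical
  have : NeZero m := ⟨by omega⟩
  obtain ⟨hinj, harc⟩ := hc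
  let T' : ZMod m → ZMod m → Prop := fun i j => T (c i) (c j)
  have hT' : Stmt10.Tour T' := by
    constructor
    · intro a b hab
      have hne : c a ≠ c b := by
        intro e
        have h : T (c a) (c b) := hab
        rw [e] at h
        exact hT.1 _ h
      exact (hT.2 _ _ hne).1 hab
    · intro a b hab
      by_cases h : T (c b) (c a)
      · exact Or.inr h
      · exact Or.inl ((hT.2 _ _ (fun e => hab (hinj e))).2 h)
  have hC : Stmt10.Cut T' := by
    intro A ⟨a, ha⟩ hu
    by_contra hcon
    push Not at hcon
    apply hu
    have hs : ∀ i ∈ A, i + 1 ∈ A := by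
      intro i hi
      by_contra h
      exact hcon i hi (i + 1) h (harc i)
    have hn : ∀ n : ℕ, a + (n : ZMod m) ∈ A := by
      intro n
      induction n with
      | zero => simpa using ha
      | succ n ih => have := hs _ ih; push_cast; rwa [← add_assoc]
    refine Finset.eq_univ_of_forall (fun v => ?_)
    have := hn (v - a).val
    rwa [ZMod.natCast_zmod_val, add_sub_cancel] at this
  obtain ⟨x, y, hxy, hH, p, q, r, hpq, hpr, hqr, hp, hq, hr⟩ :=
    Stmt10.good hT' hC (by rw [ZMod.card]; exact hm)
  have hcard : ({x, y}ᶜ : Finset (ZMod m)).card = m - 2 := by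
    rw [Finset.card_compl, ZMod.card, Finset.card_pair (hT'.ne hxy)]
  obtain ⟨f, ⟨hf1, hf2⟩, hf3⟩ := hH.toFun hcard (by omega)
  refine ⟨c ∘ f, ⟨hinj.comp hf1, hf2⟩, Set.range_comp_subset_range f c, c x, c y, ?_, hxy, ?_⟩
  · rw [Set.range_comp, hf3]
    ext v
    simp only [Set.mem_diff, Set.mem_range, Set.mem_image, Set.mem_insert_iff,
      Set.mem_singleton_iff, Finset.coe_compl, Set.mem_compl_iff, Finset.mem_coe,
      Finset.mem_insert, Finset.mem_singleton]
    constructor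
    · rintro ⟨⟨i, rfl⟩, h⟩
      by_contra hh
      push Not at hh
      refine h ⟨i, ?_, rfl⟩
      rintro (rfl | rfl)
      · exact hh.1 rfl
      · exact hh.2 rfl
    · rintro (rfl | rfl)
      · exact ⟨⟨x, rfl⟩, fun ⟨i, h, e⟩ => h (Or.inl (hinj e))⟩
      · exact ⟨⟨y, rfl⟩, fun ⟨i, h, e⟩ => h (Or.inr (hinj e))⟩
  · unfold outDegTo
    have hD : ({y, p, q, r} : Finset (ZMod m)).card = 4 := by
      rw [Finset.card_eq_four]
      exact ⟨y, p, q, r, (hT'.ne hp).symm, (hT'.ne hq).symm, (hT'.ne hr).symm, hpq, hpr, hqr, rfl⟩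
    have hD' : ((({y, p, q, r} : Finset (ZMod m))ᶜ).image c).card = m - 4 := by
      rw [Finset.card_image_of_injective _ hinj, Finset.card_compl, ZMod.card, hD]
    rw [← hD', ← Set.ncard_coe_finset]
    refine Set.ncard_le_ncard ?_ (Finset.finite_toSet _)
    rintro w ⟨⟨i, rfl⟩, hw⟩
    simp only [Finset.coe_image, Set.mem_image, Finset.mem_coe, Finset.mem_compl,
      Finset.mem_insert, Finset.mem_singleton]
    refine ⟨i, ?_, rfl⟩
    rintro (rfl | rfl | rfl | rfl)
    · exact hT'.ne hw rfl
    · exact hT'.asym _ _ hp hw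
    · exact hT'.asym _ _ hq hw
    · exact hT'.asym _ _ hr hw
end

section
/- Let q ≥ 9 and k be integers with 2 ≤ k ≤ q + 1, let T be a tournament with minimum out-degree at least (q − 1)k − 1, let Ω be a collection of k − 1 pairwise vertex-disjoint q-cycles of T, and let P be a Hamiltonian path of the subtournament T ∖ Ω. Let F₁ and F₂ be disjoint vertex sets with V(F₁) ∪ V(F₂) = V(P) such that F₂ dominates F₁, and suppose |F₁| ≤ q − 1. Let Cᵢ ∈ Ω satisfy d⁺(F₁, Cᵢ) ≥ (q − 2/q − (|F₁| − 1)/(2q))·|F₁|, and let C′ᵢ be a directed cycle of length q − 2 with V(C′ᵢ) ⊆ V(Cᵢ). Then there exist three distinct vertices z₁, z₂, z₃ ∈ V(C′ᵢ) such that d⁺(zⱼ, F₁) = 0 for each j = 1, 2, 3. -/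
open Set

theorem stmt14 {V : Type*} [Fintype V] (T : V → V → Prop) (hT : IsTournament T)
    (q k : ℕ) (hq : 9 ≤ q) (hk1 : 2 ≤ k) (hk2 : k ≤ q + 1)
    (hdeg : ∀ v, (q - 1) * k - 1 ≤ outDeg T v)
    (C : Fin (k - 1) → ZMod q → V) (hC : ∀ j, IsCycle T q (C j))
    (hdisj : DisjointCycles C)
    (l : ℕ) (u : Fin l → V) (hP : IsHamPathOn T ((⋃ j, Set.range (C j))ᶜ) u)
    (F₁ F₂ : Set V) (hF : Disjoint F₁ F₂) (hFU : F₁ ∪ F₂ = Set.range u)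
    (hdom : ∀ x ∈ F₂, ∀ y ∈ F₁, T x y)
    (hF1 : F₁.ncard ≤ q - 1)
    (i : Fin (k - 1))
    (hi : ((q : ℝ) - 2 / (q : ℝ) - ((F₁.ncard : ℝ) - 1) / (2 * (q : ℝ))) * (F₁.ncard : ℝ)
        ≤ (arcs T F₁ (Set.range (C i)) : ℝ))
    (c' : ZMod (q - 2) → V) (hc' : IsCycle T (q - 2) c')
    (hsub : Set.range c' ⊆ Set.range (C i)) :
    ∃ z₁ ∈ Set.range c', ∃ z₂ ∈ Set.range c', ∃ z₃ ∈ Set.range c',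
      z₁ ≠ z₂ ∧ z₁ ≠ z₃ ∧ z₂ ≠ z₃ ∧
      outDegTo T z₁ F₁ = 0 ∧ outDegTo T z₂ F₁ = 0 ∧ outDegTo T z₃ F₁ = 0 := by
  classical
  have hdis : ∀ x ∈ F₁, ∀ y ∈ Set.range (C i), x ≠ y := by
    rintro x hx y hy rfl
    have h1 : x ∈ Set.range u := hFU ▸ Or.inl hx
    rw [hP.2.1] at h1
    exact h1 (Set.mem_iUnion.2 ⟨i, hy⟩)
  have hA : (Set.range (C i)).ncard = q := by
    rw [← Set.image_univ, Set.ncard_image_of_injective _ (hC i).1, Set.ncard_univ, Nat.card_zmod]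
  have hA' : (Set.range c').ncard = q - 2 := by
    rw [← Set.image_univ, Set.ncard_image_of_injective _ hc'.1, Set.ncard_univ, Nat.card_zmod]
  set A := Set.range (C i) with hAdef
  let R : Set (V × V) := {p | p.1 ∈ F₁ ∧ p.2 ∈ A ∧ T p.2 p.1}
  -- arcs in both directions add up
  have hsum : arcs T F₁ A + R.ncard = F₁.ncard * q := by
    unfold arcs
    rw [← hA, ← Set.ncard_prod, ← Set.ncard_union_eq _ (Set.toFinite _) (Set.toFinite _)]
    · congr 1
      ext ⟨x, y⟩
      simp only [R, Set.mem_union, Set.mem_ofPred_eq, Set.mem_prod]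
      constructor
      · tauto
      · rintro ⟨hx, hy⟩
        have := hT.2 x y (hdis x hx y hy)
        tauto
    · rw [Set.disjoint_left]
      rintro ⟨x, y⟩ ⟨hx, hy, h1⟩ ⟨_, _, h2⟩
      exact (hT.2 x y (hdis x hx y hy)).1 h1 h2
  -- few reversed arcs
  have hR : 2 * R.ncard ≤ q := by
    have hs : (arcs T F₁ A : ℝ) + R.ncard = F₁.ncard * q := by exact_mod_cast hsum
    have hf : (F₁.ncard : ℝ) + 1 ≤ q := by
      have : F₁.ncard + 1 ≤ q := by omega
      exact_mod_cast this
    have hq0 : (9 : ℝ) ≤ q := by exact_mod_cast hq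
    have hf0 : (0 : ℝ) ≤ F₁.ncard := Nat.cast_nonneg _
    set f : ℝ := (F₁.ncard : ℝ)
    have h1 : (R.ncard : ℝ) ≤ f * (f + 3) / (2 * q) := by
      have : ((q : ℝ) - 2 / q - (f - 1) / (2 * q)) * f = f * q - f * (f + 3) / (2 * q) := by
        field_simp
        ring
      linarith
    rw [le_div_iff₀ (by positivity)] at h1
    have h2 : (2 * R.ncard : ℝ) * q < (q + 1) * q := by nlinarith
    have h3 : (2 * R.ncard : ℝ) < q + 1 := lt_of_mul_lt_mul_right h2 (by positivity)
    have h4 : 2 * R.ncard < q + 1 := by exact_mod_cast h3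
    omega
  let G : Set V := {z ∈ Set.range c' | outDegTo T z F₁ = 0}
  have hcov : Set.range c' ⊆ G ∪ Prod.snd '' R := by
    intro z hz
    by_cases h : outDegTo T z F₁ = 0
    · exact Or.inl ⟨hz, h⟩
    · right
      obtain ⟨w, hw, hzw⟩ := Set.nonempty_of_ncard_ne_zero h
      exact ⟨(w, z), ⟨hw, hsub hz, hzw⟩, rfl⟩
  have hG : 2 < G.ncard := by
    have h1 := Set.ncard_le_ncard hcov (Set.toFinite _)
    have h2 := Set.ncard_union_le G (Prod.snd '' R)
    have h3 := Set.ncard_image_le (f := Prod.snd) (Set.toFinite R)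
    omega
  obtain ⟨a, b, c, ha, hb, hc, hab, hac, hbc⟩ := (Set.two_lt_ncard_iff (Set.toFinite G)).1 hG
  exact ⟨a, ha.1, b, hb.1, c, hc.1, hab, hac, hbc, ha.2, hb.2, hc.2⟩
end

section
/- Let q ≥ 9 and k be integers with 2 ≤ k ≤ q + 1, let T be a tournament with minimum out-degree at least (q − 1)k − 1, let Ω be a collection of k − 1 pairwise vertex-disjoint q-cycles of T, and let P be a Hamiltonian path of the subtournament T ∖ Ω. Let F₁ and F₂ be disjoint vertex sets with V(F₁) ∪ V(F₂) = V(P) such that F₂ dominates F₁. Let Cᵢ ∈ Ω and let z be a vertex of Cᵢ that is dominated by F₁. Then: (i) if d⁺(z, Cᵢ) ≤ q − 3, then d⁺(z, F₂) ≥ 1; and (ii) if d⁺(z, Cᵢ) ≤ q − 4, then d⁺(z, F₂) ≥ 2. -/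
open Set

theorem stmt15 {V : Type*} [Fintype V] (T : V → V → Prop) (hT : IsTournament T)
    (q k : ℕ) (hq : 9 ≤ q) (hk1 : 2 ≤ k) (hk2 : k ≤ q + 1)
    (hdeg : ∀ v, (q - 1) * k - 1 ≤ outDeg T v)
    (C : Fin (k - 1) → ZMod q → V) (hC : ∀ j, IsCycle T q (C j))
    (hdisj : DisjointCycles C)
    (l : ℕ) (u : Fin l → V) (hP : IsHamPathOn T ((⋃ j, Set.range (C j))ᶜ) u)
    (F₁ F₂ : Set V) (hF : Disjoint F₁ F₂) (hFU : F₁ ∪ F₂ = Set.range u)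
    (hdom : ∀ x ∈ F₂, ∀ y ∈ F₁, T x y)
    (i : Fin (k - 1)) (z : V) (hz : z ∈ Set.range (C i))
    (hzdom : ∀ x ∈ F₁, T x z) :
    (outDegTo T z (Set.range (C i)) ≤ q - 3 → 1 ≤ outDegTo T z F₂) ∧
    (outDegTo T z (Set.range (C i)) ≤ q - 4 → 2 ≤ outDegTo T z F₂) := by
  classical
  haveI : NeZero q := ⟨by omega⟩
  have key : outDeg T z ≤ outDegTo T z (Set.range (C i)) + (k - 2) * q + outDegTo T z F₂ := by
    set D : Finset V := (Finset.univ.erase i).biUnion (fun j => Finset.univ.image (C j)) with hD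
    have hDc : D.card ≤ (k - 2) * q := by
      have h1 : D.card ≤ (Finset.univ.erase i).card * q := by
        apply Finset.card_biUnion_le_card_mul
        intro j _
        refine Finset.card_image_le.trans ?_
        rw [Finset.card_univ, ZMod.card]
      rw [Finset.card_erase_of_mem (Finset.mem_univ i), Finset.card_univ, Fintype.card_fin] at h1
      exact h1
    have hsub : {w | T z w} ⊆ {w ∈ Set.range (C i) | T z w} ∪ (D : Set V) ∪ {w ∈ F₂ | T z w} := by
      intro w hw
      have hw' : T z w := hw
      by_cases h : w ∈ ⋃ j, Set.range (C j)
      · left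
        obtain ⟨j, hj⟩ := Set.mem_iUnion.mp h
        by_cases hji : j = i
        · subst hji
          exact Or.inl ⟨hj, hw'⟩
        · right
          obtain ⟨a, rfl⟩ := hj
          simp only [hD, Finset.mem_coe, Finset.mem_biUnion]
          exact ⟨j, by simp [hji], by simp⟩
      · right
        have h2 : w ∈ F₁ ∪ F₂ := by
          rw [hFU, hP.2.1]
          exact h
        rcases h2 with h2 | h2
        · exfalso
          have h3 := hzdom w h2
          have hne : z ≠ w := by
            rintro rfl
            exact hT.1 _ hw'
          exact (hT.2 z w hne).mp hw' h3
        · exact ⟨h2, hw'⟩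
    unfold outDeg outDegTo
    refine (Set.ncard_le_ncard hsub (Set.toFinite _)).trans ?_
    refine (Set.ncard_union_le _ _).trans ?_
    have := Set.ncard_union_le {w ∈ Set.range (C i) | T z w} (D : Set V)
    rw [Set.ncard_coe_finset] at this
    omega
  have h0 := hdeg z
  obtain ⟨m, rfl⟩ : ∃ m, k = m + 2 := ⟨k - 2, by omega⟩
  obtain ⟨p, rfl⟩ : ∃ p, q = p + 1 := ⟨q - 1, by omega⟩
  simp only [Nat.add_sub_cancel] at h0 key
  have e1 : p * (m + 2) = m * p + 2 * p := by ring
  have e2 : m * (p + 1) = m * p + m := by ring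
  rw [e1] at h0
  rw [e2] at key
  constructor <;> intro h <;> omega
end

section
/- Let q ≥ 9 and k be integers with 2 ≤ k ≤ q + 1, let T be a tournament with minimum out-degree at least (q − 1)k − 1, let Ω be a collection of k − 1 pairwise vertex-disjoint q-cycles of T, and let P be a Hamiltonian path of the subtournament T ∖ Ω. Let F₁ and F₂ be disjoint vertex sets with V(F₁) ∪ V(F₂) = V(P) such that F₂ dominates F₁, and suppose q − 2 ≤ |F₁| ≤ q. Let Cᵢ ∈ Ω satisfy d⁺(F₁, Cᵢ) ≥ (q − 2/q − (|F₁| − 1)/(2q))·|F₁|, and let F ⊆ F₁ with |F| ≥ |F₁| − 1. Then d⁺(F, v) ≥ 1 for every vertex v of Cᵢ, i.e., every vertex of Cᵢ has an in-neighbour in F. -/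
open Set

theorem stmt16 {V : Type*} [Fintype V] (T : V → V → Prop) (hT : IsTournament T)
    (q k : ℕ) (hq : 9 ≤ q) (hk1 : 2 ≤ k) (hk2 : k ≤ q + 1)
    (hdeg : ∀ v, (q - 1) * k - 1 ≤ outDeg T v)
    (C : Fin (k - 1) → ZMod q → V) (hC : ∀ j, IsCycle T q (C j))
    (hdisj : DisjointCycles C)
    (l : ℕ) (u : Fin l → V) (hP : IsHamPathOn T ((⋃ j, Set.range (C j))ᶜ) u)
    (F₁ F₂ : Set V) (hF : Disjoint F₁ F₂) (hFU : F₁ ∪ F₂ = Set.range u)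
    (hdom : ∀ x ∈ F₂, ∀ y ∈ F₁, T x y)
    (hF1lo : q - 2 ≤ F₁.ncard) (hF1hi : F₁.ncard ≤ q)
    (i : Fin (k - 1))
    (hi : ((q : ℝ) - 2 / (q : ℝ) - ((F₁.ncard : ℝ) - 1) / (2 * (q : ℝ))) * (F₁.ncard : ℝ)
        ≤ (arcs T F₁ (Set.range (C i)) : ℝ))
    (F : Set V) (hFsub : F ⊆ F₁) (hFcard : F₁.ncard - 1 ≤ F.ncard) :
    ∀ v ∈ Set.range (C i), 1 ≤ inDegFrom T F v := by
  intro v hv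
  by_contra hcon
  have h0 : {x ∈ F | T x v}.ncard = 0 := by
    unfold inDegFrom at hcon
    omega
  rw [Set.ncard_eq_zero (Set.toFinite _)] at h0
  have hcr : (Set.range (C i)).ncard = q := by
    rw [← Set.image_univ, Set.ncard_image_of_injective _ (hC i).1, Set.ncard_univ, Nat.card_zmod]
  have hsub : {p : V × V | p.1 ∈ F₁ ∧ p.2 ∈ Set.range (C i) ∧ T p.1 p.2} ⊆
      (F₁ ×ˢ Set.range (C i)) \ (F ×ˢ {v}) := by
    rintro ⟨a, b⟩ ⟨h1, h2, h3⟩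
    refine ⟨⟨h1, h2⟩, ?_⟩
    rintro ⟨h4, h5⟩
    have h5' : b = v := h5
    have h3' : T a b := h3
    rw [h5'] at h3'
    have h6 : a ∈ {x ∈ F | T x v} := ⟨h4, h3'⟩
    rw [h0] at h6
    exact h6
  have hsub2 : F ×ˢ {v} ⊆ F₁ ×ˢ Set.range (C i) :=
    Set.prod_mono hFsub (by simpa using hv)
  have hle := Set.ncard_le_ncard hsub (Set.toFinite _)
  have hadd := Set.ncard_sdiff_add_ncard_of_subset hsub2 (Set.toFinite _)
  rw [Set.ncard_prod, Set.ncard_prod, hcr, Set.ncard_singleton] at hadd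
  have hkey : arcs T F₁ (Set.range (C i)) + F.ncard ≤ F₁.ncard * q := by
    unfold arcs
    omega
  have hkey2 : arcs T F₁ (Set.range (C i)) + F₁.ncard ≤ F₁.ncard * q + 1 := by omega
  have hf7 : 7 ≤ F₁.ncard := by omega
  generalize arcs T F₁ (Set.range (C i)) = A at *
  generalize F₁.ncard = f at *
  have e1 : (A : ℝ) + f ≤ f * q + 1 := by exact_mod_cast hkey2
  have e2 : (7 : ℝ) ≤ f := by exact_mod_cast hf7
  have e3 : (f : ℝ) ≤ q := by exact_mod_cast hF1hi
  have hq0 : (0 : ℝ) < q := by linarith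
  have e4 : ((q : ℝ) - 2 / (q : ℝ) - ((f : ℝ) - 1) / (2 * (q : ℝ))) * (f : ℝ)
      = q * f - (f + 3) / 2 * (f / q) := by
    field_simp
    ring
  have e5 : (f : ℝ) / q ≤ 1 := (div_le_one hq0).2 e3
  have e6 : ((f : ℝ) + 3) / 2 * (f / q) ≤ (f + 3) / 2 :=
    mul_le_of_le_one_right (by linarith) e5
  rw [e4] at hi
  nlinarith
end
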